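/- arXiv:1905.07983 — 2 statements merged into one kernel-verified Lean document; each statement's English description precedes it below -/
import Mathlib

section
/- Let N ≥ 1, a ≥ 0, b > 0, and set α = a+b−1 and β = b−1 (so α, β > −1). Let z_1 < ... < z_N be the ordered zeros of the Jacobi polynomial P_N^{(α,β)} and let φ(x) = Π_{1≤i<j≤N}(x_j−x_i) · Π_{j=1}^N (1−x_j)^{(a+b)/2}(1+x_j)^{b/2}. Then φ(z) = 2^{N(N+α+β+1)/2} · Π_{j=1}^N j^{j/2} (α+j)^{(α+j)/2} (β+j)^{(β+j)/2} / (N+α+β+j)^{(N+α+β+j)/2}. -/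
open MeasureTheory Filter Real Finset Topology

/-!
The square of `φ(z)` is the discriminant of the monic polynomial `p` with zeros `z_j`, times
`p(1) ^ (α + 1)` and `|p(-1)| ^ (β + 1)`. All three quantities follow from the Jacobi differential
equation, which `p` satisfies because the Jacobi operator is symmetric for the Jacobi weight and
`L p + n (n + α + β + 1) p` has degree less than `n`, hence is orthogonal to itself.

If `q` denotes the monic solution of degree `n` for `(α + 1, β + 1)`, then a monic solution `p` of
degree `n + 1` for `(α, β)` satisfies `p' = (n + 1) q`, and the equation itself reads
`(n + α + β + 2) p = (X² - 1) q' + (α - β + (α + β + 2) X) q`. Evaluating at `±1` gives recursions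
for `p(±1)`. Modulo `q` the last term vanishes, so taking resultants with `q` expresses
`Res(p, p')` through `Res(q, q')` and `q(1) q(-1)`, which is a recursion for the discriminant.
-/

section Resultant

open Polynomial

variable {R : Type*} [CommRing R] {f g h : R[X]} {n : ℕ}

theorem resultant_eq_of_monic_of_natDegree_le (hf : f.Monic) (hg : g.natDegree ≤ n) :
    resultant f g f.natDegree n = resultant f g := by
  obtain ⟨k, rfl⟩ := Nat.exists_eq_add_of_le hg
  rw [resultant_add_right_deg _ _ _ _ _ le_rfl, hf.coeff_natDegree, one_pow, one_mul]

theorem resultant_mul_right_of_monic (hf : f.Monic) :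
    resultant f (g * h) = resultant f g * resultant f h := by
  rw [← resultant_mul_right _ _ _ _ le_rfl,
    resultant_eq_of_monic_of_natDegree_le hf natDegree_mul_le]

theorem resultant_C_mul_right_of_monic (hf : f.Monic) (hn : f.natDegree = n) (r : R) :
    resultant f (C r * g) = r ^ n * resultant f g := by
  rw [resultant_mul_right_of_monic hf, natDegree_C, resultant_C_zero_right, hn]

theorem resultant_add_mul_right_of_monic (hf : f.Monic) :
    resultant f (g + f * h) = resultant f g := by
  let n := max g.natDegree (h.natDegree + f.natDegree)
  have hfh : (f * h).natDegree ≤ n := by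
    rw [mul_comm]
    exact natDegree_mul_le.trans (le_max_right _ _)
  rw [← resultant_eq_of_monic_of_natDegree_le hf
      (natDegree_add_le_of_degree_le (le_max_left _ _) hfh),
    resultant_add_mul_right _ _ _ _ _ (le_max_right _ _) le_rfl,
    resultant_eq_of_monic_of_natDegree_le hf (le_max_left _ _)]

theorem resultant_X_sq_sub_one_right_of_monic (hf : f.Monic) :
    resultant f (X ^ 2 - 1) = f.eval 1 * f.eval (-1) := by
  nontriviality R
  have hfactor : (X ^ 2 - 1 : R[X]) = (X - C 1) * (X + C 1) := by
    rw [C_1]; ring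
  rw [hfactor, resultant_mul_right_of_monic hf, natDegree_X_sub_C, natDegree_X_add_C,
    resultant_X_sub_C_right _ _ _ le_rfl, resultant_X_add_C_right _ _ _ le_rfl,
    mul_mul_mul_comm, ← mul_pow, neg_one_mul, neg_neg, one_pow, one_mul]

theorem discr_eq_resultant_derivative_of_monic (hf : f.Monic) (hn : f.natDegree = n) :
    f.discr = (-1) ^ (n * (n - 1) / 2) * resultant f (derivative f) := by
  subst hn
  rcases f.natDegree.eq_zero_or_pos with hdeg | hdeg
  · rw [hf.natDegree_eq_zero.mp hdeg, ← C_1, discr_C]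
    simp
  · rw [← resultant_eq_of_monic_of_natDegree_le hf (natDegree_derivative_le f),
      resultant_deriv (natDegree_pos_iff_degree_pos.mp hdeg), hf.leadingCoeff, mul_one,
      ← mul_assoc, ← mul_pow, neg_one_mul, neg_neg, one_pow, one_mul]

theorem resultant_nodal_left {ι : Type*} (s : Finset ι) (v : ι → R) :
    resultant (Lagrange.nodal s v) g = ∏ i ∈ s, g.eval (v i) := by
  nontriviality R
  rw [Lagrange.nodal, resultant_prod_left _ _ _ _ (by simp) le_rfl]
  refine prod_congr rfl fun i _ => ?_
  rw [natDegree_X_sub_C, resultant_X_sub_C_left _ _ _ le_rfl]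

theorem prod_prod_Ioi_neg_one (n : ℕ) :
    ∏ i : Fin n, ∏ _j ∈ Ioi i, (-1 : R) = (-1) ^ (n * (n - 1) / 2) := by
  simp_rw [prod_const, Fin.card_Ioi]
  rw [prod_pow_eq_pow_sum, Fin.sum_univ_eq_sum_range (fun i => n - 1 - i) n,
    sum_range_reflect (fun i => i), sum_range_id]

theorem discr_nodal (v : Fin n → R) :
    (Lagrange.nodal univ v).discr = (∏ i, ∏ j ∈ Ioi i, (v j - v i)) ^ 2 := by
  nontriviality R
  have hderiv : resultant (Lagrange.nodal univ v) (derivative (Lagrange.nodal univ v)) =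
      ∏ i, ∏ j ∈ {i}ᶜ, (v i - v j) := by
    rw [resultant_nodal_left]
    refine prod_congr rfl fun i hi => ?_
    rw [Lagrange.eval_nodal_derivative_eval_node_eq hi, Lagrange.eval_nodal, compl_singleton]
  rw [discr_eq_resultant_derivative_of_monic Lagrange.nodal_monic (n := n) (by simp), hderiv,
    ← prod_prod_Ioi_neg_one,
    ← prod_prod_Ioi_mul_eq_prod_prod_off_diag (fun j i => v i - v j)]
  simp_rw [← prod_mul_distrib, ← prod_pow]
  exact prod_congr rfl fun i _ => prod_congr rfl fun j _ => by ring

theorem exists_eq_C_mul_nodal [IsDomain R] {ι : Type*} {s : Finset ι} {v : ι → R}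
    (hv : Set.InjOn v s) {P : R[X]} (hdeg : P.degree = #s) (hroot : ∀ i ∈ s, P.eval (v i) = 0) :
    ∃ c ≠ 0, P = C c * Lagrange.nodal s v := by
  have hlead : P.leadingCoeff ≠ 0 := leadingCoeff_ne_zero.mpr fun h => by simp [h] at hdeg
  refine ⟨P.leadingCoeff, hlead,
    eq_of_degree_le_of_eval_index_eq s hv hdeg.le ?_ ?_ fun i hi => ?_⟩
  · rw [degree_C_mul hlead, Lagrange.degree_nodal, hdeg]
  · rw [leadingCoeff_mul, leadingCoeff_C, Lagrange.nodal_monic.leadingCoeff, mul_one]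
  · rw [hroot i hi, eval_mul, Lagrange.eval_nodal_at_node hi, mul_zero]

theorem neg_one_pow_mul_eval_neg_one_nodal (v : Fin n → R) :
    (-1) ^ n * (Lagrange.nodal univ v).eval (-1) = ∏ i, (1 + v i) := by
  rw [Lagrange.eval_nodal, ← Fin.prod_const, ← prod_mul_distrib]
  exact prod_congr rfl fun i _ => by ring

theorem prod_filter_fst_lt_snd {ι M : Type*} [Fintype ι] [Preorder ι] [LocallyFiniteOrderTop ι]
    [DecidableLT ι] [CommMonoid M] (f : ι → ι → M) :
    ∏ p : ι × ι with p.1 < p.2, f p.1 p.2 = ∏ i, ∏ j ∈ Ioi i, f i j :=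
  prod_finset_product _ _ _ (by simp)

end Resultant

section JacobiOperator

open Polynomial

variable {R : Type*} [CommRing R] {α β : R} {p : R[X]} {n : ℕ}

/-- The Jacobi differential operator `p ↦ (1 - X²) p'' + (β - α - (α + β + 2) X) p'`, whose
eigenfunctions are the Jacobi polynomials with parameters `α` and `β`. -/
noncomputable def jacobiOperator (α β : R) : R[X] →ₗ[R] R[X] :=
  LinearMap.mulLeft R (1 - X ^ 2) ∘ₗ derivative ∘ₗ derivative +
    LinearMap.mulLeft R (C (β - α) - C (α + β + 2) * X) ∘ₗ derivative

theorem jacobiOperator_apply (α β : R) (p : R[X]) :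
    jacobiOperator α β p = (1 - X ^ 2) * derivative (derivative p) +
      (C (β - α) - C (α + β + 2) * X) * derivative p :=
  rfl

theorem derivative_jacobiOperator (α β : R) (p : R[X]) :
    derivative (jacobiOperator α β p) =
      jacobiOperator (α + 1) (β + 1) (derivative p) - C (α + β + 2) * derivative p := by
  simp only [jacobiOperator_apply, derivative_add, derivative_mul, derivative_sub, derivative_C,
    derivative_X, derivative_X_pow, derivative_one]
  simp only [C_add, C_sub, map_ofNat, C_1, Nat.cast_ofNat]
  ring

theorem coeff_jacobiOperator (α β : R) (p : R[X]) (k : ℕ) :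
    (jacobiOperator α β p).coeff k =
      (k + 2) * (k + 1) * p.coeff (k + 2) + (β - α) * (k + 1) * p.coeff (k + 1) -
        k * (k + α + β + 1) * p.coeff k := by
  have coeff_X_mul_derivative (f : R[X]) : (X * derivative f).coeff k = k * f.coeff k := by
    cases k with
    | zero => simp
    | succ m => rw [coeff_X_mul, coeff_derivative]; push_cast; ring
  have hEuler : jacobiOperator α β p = derivative (derivative p) + C (β - α) * derivative p -
      (X * derivative (X * derivative p) + C (α + β + 1) * (X * derivative p)) := by
    simp only [jacobiOperator_apply, derivative_mul, derivative_X, C_add, map_ofNat, C_1]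
    ring
  simp only [hEuler, coeff_add, coeff_sub, coeff_C_mul, coeff_X_mul_derivative, coeff_derivative]
  push_cast
  ring

theorem degree_jacobiOperator_lt (hp : p.degree < n) : (jacobiOperator α β p).degree < n := by
  rw [degree_lt_iff_coeff_zero] at hp ⊢
  intro k hk
  rw [coeff_jacobiOperator, hp k hk, hp (k + 1) (by lia), hp (k + 2) (by lia)]
  ring

theorem degree_jacobiOperator_add_lt (hp : p.degree ≤ n) :
    (jacobiOperator α β p + C (n * (n + α + β + 1)) * p).degree < n := by
  rw [degree_le_iff_coeff_zero] at hp
  have hcoeff (k : ℕ) (hk : n < k) : p.coeff k = 0 := hp k (by exact_mod_cast hk)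
  rw [degree_lt_iff_coeff_zero]
  intro k hk
  rw [coeff_add, coeff_C_mul, coeff_jacobiOperator, hcoeff (k + 1) (by lia),
    hcoeff (k + 2) (by lia)]
  rcases hk.eq_or_lt with rfl | hlt
  · ring
  · rw [hcoeff k hlt]; ring

/-- `p` is a monic solution of degree `n` of the Jacobi differential equation, that is, the Jacobi
polynomial `P_n^{(α,β)}` normalised to be monic. (For special `α + β` the equation may have several
such solutions.) -/
structure IsMonicJacobi (n : ℕ) (α β : R) (p : R[X]) : Prop where
  monic : p.Monic
  natDegree_eq : p.natDegree = n
  jacobiOperator_add_eq_zero : jacobiOperator α β p + C (n * (n + α + β + 1)) * p = 0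

end JacobiOperator

section MonicJacobi

open Polynomial

variable {K : Type*} [Field K] [CharZero K] {α β : K} {n : ℕ} {p q : K[X]}

theorem IsMonicJacobi.exists_derivative_eq (hp : IsMonicJacobi (n + 1) α β p) :
    ∃ q, IsMonicJacobi n (α + 1) (β + 1) q ∧ derivative p = C (n + 1 : K) * q := by
  have hn : (n + 1 : K) ≠ 0 := n.cast_add_one_ne_zero
  obtain ⟨q, hq⟩ : ∃ q, derivative p = C (n + 1 : K) * q :=
    ⟨C (n + 1 : K)⁻¹ * derivative p, by rw [← mul_assoc, ← C_mul, mul_inv_cancel₀ hn, C_1, one_mul]⟩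
  refine ⟨q, ⟨?_, ?_, ?_⟩, hq⟩
  · have hlead := congrArg leadingCoeff hq
    rw [leadingCoeff_derivative, hp.monic.leadingCoeff, hp.natDegree_eq, leadingCoeff_mul,
      leadingCoeff_C] at hlead
    exact mul_left_cancel₀ hn (by simpa using hlead.symm)
  · rw [← natDegree_C_mul hn, ← hq, natDegree_derivative, hp.natDegree_eq, Nat.add_sub_cancel]
  · have hode := congrArg derivative hp.jacobiOperator_add_eq_zero
    refine (mul_eq_zero.mp ?_).resolve_left (C_ne_zero.mpr hn)
    rw [derivative_add, derivative_jacobiOperator, derivative_C_mul, hq, ← smul_eq_C_mul, map_smul,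
      derivative_zero] at hode
    rw [← hode]
    simp only [smul_eq_C_mul, C_mul, C_add, C_1, map_natCast, map_ofNat]
    push_cast
    ring

theorem IsMonicJacobi.C_mul_eq_of_derivative_eq (hp : IsMonicJacobi (n + 1) α β p)
    (hq : derivative p = C (n + 1 : K) * q) :
    C (n + α + β + 2) * p =
      (X ^ 2 - 1) * derivative q + q * (C (α - β) + C (α + β + 2) * X) := by
  have hn : (n + 1 : K) ≠ 0 := n.cast_add_one_ne_zero
  have hode := hp.jacobiOperator_add_eq_zero
  refine mul_left_cancel₀ (C_ne_zero.mpr hn) (sub_eq_zero.mp ?_)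
  rw [← hode, jacobiOperator_apply, hq, derivative_C_mul]
  simp only [C_mul, C_add, C_sub, C_1, map_natCast, map_ofNat]
  push_cast
  ring

theorem IsMonicJacobi.prod_mul_eval_one (hp : IsMonicJacobi n α β p) :
    (∏ j ∈ range n, (n + α + β + j + 1)) * p.eval 1 = ∏ j ∈ range n, 2 * (α + j + 1) := by
  induction n generalizing α β p with
  | zero => simp [hp.monic.natDegree_eq_zero.mp hp.natDegree_eq]
  | succ n ih =>
    obtain ⟨q, hqJ, hq⟩ := hp.exists_derivative_eq
    have hrec : (n + α + β + 2) * p.eval 1 = 2 * (α + 1) * q.eval 1 := by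
      have h := congrArg (eval 1) (hp.C_mul_eq_of_derivative_eq hq)
      simp only [eval_mul, eval_add, eval_sub, eval_pow, eval_C, eval_X, eval_one] at h
      linear_combination h
    calc (∏ j ∈ range (n + 1), (((n + 1 : ℕ) : K) + α + β + j + 1)) * p.eval 1
      _ = (∏ j ∈ range n, (n + (α + 1) + (β + 1) + j + 1)) * ((n + α + β + 2) * p.eval 1) := by
        rw [prod_range_succ']; push_cast; ring_nf
      _ = 2 * (α + 1) * ((∏ j ∈ range n, (n + (α + 1) + (β + 1) + j + 1)) * q.eval 1) := by
        rw [hrec]; ring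
      _ = ∏ j ∈ range (n + 1), 2 * (α + j + 1) := by
        rw [ih hqJ, prod_range_succ']; push_cast; ring_nf

theorem IsMonicJacobi.prod_mul_eval_neg_one (hp : IsMonicJacobi n α β p) :
    (∏ j ∈ range n, (n + α + β + j + 1)) * ((-1) ^ n * p.eval (-1)) =
      ∏ j ∈ range n, 2 * (β + j + 1) := by
  induction n generalizing α β p with
  | zero => simp [hp.monic.natDegree_eq_zero.mp hp.natDegree_eq]
  | succ n ih =>
    obtain ⟨q, hqJ, hq⟩ := hp.exists_derivative_eq
    have hrec : (n + α + β + 2) * p.eval (-1) = -(2 * (β + 1) * q.eval (-1)) := by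
      have h := congrArg (eval (-1)) (hp.C_mul_eq_of_derivative_eq hq)
      simp only [eval_mul, eval_add, eval_sub, eval_pow, eval_C, eval_X, eval_one] at h
      linear_combination h
    calc (∏ j ∈ range (n + 1), (((n + 1 : ℕ) : K) + α + β + j + 1)) *
          ((-1) ^ (n + 1) * p.eval (-1))
      _ = (∏ j ∈ range n, (n + (α + 1) + (β + 1) + j + 1)) *
            ((-1) ^ (n + 1) * ((n + α + β + 2) * p.eval (-1))) := by
        rw [prod_range_succ']; push_cast; ring_nf
      _ = 2 * (β + 1) *
            ((∏ j ∈ range n, (n + (α + 1) + (β + 1) + j + 1)) * ((-1) ^ n * q.eval (-1))) := by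
        rw [hrec]; ring
      _ = ∏ j ∈ range (n + 1), 2 * (β + j + 1) := by
        rw [ih hqJ, prod_range_succ']; push_cast; ring_nf

theorem IsMonicJacobi.resultant_derivative_rec (hp : IsMonicJacobi (n + 1) α β p)
    (hqJ : IsMonicJacobi n (α + 1) (β + 1) q) (hq : derivative p = C (n + 1 : K) * q) :
    (n + α + β + 2) ^ n * resultant p (derivative p) =
      (n + 1) ^ (n + 1) * (q.eval 1 * q.eval (-1)) * resultant q (derivative q) := by
  have hswap : resultant p q = resultant q p := by
    have heven : Even (p.natDegree * q.natDegree) := by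
      rw [hp.natDegree_eq, hqJ.natDegree_eq, mul_comm]
      exact n.even_mul_succ_self
    rw [resultant_comm, heven.neg_one_pow, one_mul]
  have hreduce : (n + α + β + 2) ^ n * resultant q p =
      q.eval 1 * q.eval (-1) * resultant q (derivative q) := by
    rw [← resultant_C_mul_right_of_monic hqJ.monic hqJ.natDegree_eq,
      hp.C_mul_eq_of_derivative_eq hq, resultant_add_mul_right_of_monic hqJ.monic,
      resultant_mul_right_of_monic hqJ.monic, resultant_X_sq_sub_one_right_of_monic hqJ.monic]
  rw [hq, resultant_C_mul_right_of_monic hp.monic hp.natDegree_eq, hswap]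
  linear_combination (n + 1 : K) ^ (n + 1) * hreduce

theorem IsMonicJacobi.discr_rec (hp : IsMonicJacobi (n + 1) α β p)
    (hqJ : IsMonicJacobi n (α + 1) (β + 1) q) (hq : derivative p = C (n + 1 : K) * q) :
    (n + α + β + 2) ^ n * p.discr =
      (n + 1) ^ (n + 1) * (q.eval 1 * ((-1) ^ n * q.eval (-1))) * q.discr := by
  rw [discr_eq_resultant_derivative_of_monic hp.monic hp.natDegree_eq,
    discr_eq_resultant_derivative_of_monic hqJ.monic hqJ.natDegree_eq, Nat.triangle_succ, pow_add]
  linear_combination (-1) ^ n * (-1) ^ (n * (n - 1) / 2) * hp.resultant_derivative_rec hqJ hq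

-- The exponent `n + j - 1` is not truncated, since `j ∈ range n` forces `1 ≤ n`.
theorem IsMonicJacobi.prod_mul_discr (hp : IsMonicJacobi n α β p) :
    (∏ j ∈ range n, (n + α + β + j + 1) ^ (n + j - 1)) * p.discr =
      (∏ j ∈ range n, (j + 1 : K) ^ (j + 1)) *
        ∏ j ∈ range n, (2 * (α + j + 1) * (2 * (β + j + 1))) ^ j := by
  induction n generalizing α β p with
  | zero => rw [hp.monic.natDegree_eq_zero.mp hp.natDegree_eq, ← C_1, discr_C]; simp
  | succ n ih =>
    obtain ⟨q, hqJ, hq⟩ := hp.exists_derivative_eq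
    have hsplit : ∏ j ∈ range (n + 1), (((n + 1 : ℕ) : K) + α + β + j + 1) ^ (n + 1 + j - 1) =
        (n + α + β + 2) ^ n * ((∏ j ∈ range n, (n + (α + 1) + (β + 1) + j + 1)) ^ 2 *
          ∏ j ∈ range n, (n + (α + 1) + (β + 1) + j + 1) ^ (n + j - 1)) := by
      rw [prod_range_succ', ← prod_pow, ← prod_mul_distrib, mul_comm]
      congr 1
      · push_cast; ring_nf
      · refine prod_congr rfl fun j hj => ?_
        have hexp : n + 1 + (j + 1) - 1 = 2 + (n + j - 1) := by grind
        rw [hexp, ← pow_add]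
        push_cast; ring_nf
    have hpow : ∏ j ∈ range (n + 1), (2 * (α + j + 1) * (2 * (β + j + 1))) ^ j =
        (∏ j ∈ range n, 2 * (α + 1 + j + 1)) * (∏ j ∈ range n, 2 * (β + 1 + j + 1)) *
          ∏ j ∈ range n, (2 * (α + 1 + j + 1) * (2 * (β + 1 + j + 1))) ^ j := by
      rw [prod_range_succ', ← prod_mul_distrib, ← prod_mul_distrib, pow_zero, mul_one]
      refine prod_congr rfl fun j _ => ?_
      push_cast; ring
    rw [hsplit, hpow, prod_range_succ, ← hqJ.prod_mul_eval_one, ← hqJ.prod_mul_eval_neg_one]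
    linear_combination
      (∏ j ∈ range n, (n + (α + 1) + (β + 1) + j + 1)) ^ 2 *
        (∏ j ∈ range n, (n + (α + 1) + (β + 1) + j + 1) ^ (n + j - 1)) * hp.discr_rec hqJ hq +
      (n + 1) ^ (n + 1) * (∏ j ∈ range n, (n + (α + 1) + (β + 1) + j + 1)) ^ 2 *
        (q.eval 1 * ((-1) ^ n * q.eval (-1))) * ih hqJ

theorem IsMonicJacobi.eval_one_eq_prod (hp : IsMonicJacobi n α β p)
    (hne : ∀ j ∈ range n, n + α + β + j + 1 ≠ 0) :
    p.eval 1 = ∏ j ∈ range n, 2 * (α + j + 1) / (n + α + β + j + 1) := by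
  rw [prod_div_distrib, ← hp.prod_mul_eval_one, mul_div_cancel_left₀ _ (prod_ne_zero_iff.mpr hne)]

theorem IsMonicJacobi.neg_one_pow_mul_eval_neg_one_eq_prod (hp : IsMonicJacobi n α β p)
    (hne : ∀ j ∈ range n, n + α + β + j + 1 ≠ 0) :
    (-1) ^ n * p.eval (-1) = ∏ j ∈ range n, 2 * (β + j + 1) / (n + α + β + j + 1) := by
  rw [prod_div_distrib, ← hp.prod_mul_eval_neg_one,
    mul_div_cancel_left₀ _ (prod_ne_zero_iff.mpr hne)]

theorem IsMonicJacobi.discr_eq_prod (hp : IsMonicJacobi n α β p)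
    (hne : ∀ j ∈ range n, n + α + β + j + 1 ≠ 0) :
    p.discr = ∏ j ∈ range n, (j + 1 : K) ^ (j + 1) *
      ((2 * (α + j + 1) * (2 * (β + j + 1))) ^ j / (n + α + β + j + 1) ^ (n + j - 1)) := by
  have hpow : ∏ j ∈ range n, (n + α + β + j + 1) ^ (n + j - 1) ≠ 0 :=
    prod_ne_zero_iff.mpr fun j hj => pow_ne_zero _ (hne j hj)
  rw [prod_mul_distrib, prod_div_distrib, mul_div_assoc', ← hp.prod_mul_discr,
    mul_div_cancel_left₀ _ hpow]

end MonicJacobi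

section JacobiIntegral

open Polynomial

variable {α β : ℝ} {n : ℕ}

/-- The integral of a real polynomial over `(-1, 1)` against the Jacobi weight
`(1 - x) ^ α * (1 + x) ^ β`. -/
noncomputable def jacobiIntegral (α β : ℝ) (f : ℝ[X]) : ℝ :=
  ∫ x in Set.Ioo (-1 : ℝ) 1, f.eval x * (1 - x) ^ α * (1 + x) ^ β

theorem intervalIntegrable_eval_mul_jacobiWeight (hα : -1 < α) (hβ : -1 < β) (f : ℝ[X]) :
    IntervalIntegrable (fun x => f.eval x * (1 - x) ^ α * (1 + x) ^ β) volume (-1) 1 := by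
  have hleft : IntervalIntegrable (fun x => f.eval x * (1 - x) ^ α * (1 + x) ^ β)
      volume (-1) 0 := by
    have hsing : IntervalIntegrable (fun x : ℝ => (1 + x) ^ β) volume (-1) 0 := by
      simpa using (intervalIntegral.intervalIntegrable_rpow' (a := 0) (b := 1) hβ).comp_add_left 1
    refine hsing.continuousOn_mul (f.continuousOn.mul (.rpow_const (by fun_prop) fun x hx => ?_))
    rw [Set.uIcc_of_le (by norm_num)] at hx
    exact .inl (by linarith [hx.2])
  have hright : IntervalIntegrable (fun x => f.eval x * (1 - x) ^ α * (1 + x) ^ β)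
      volume 0 1 := by
    have hsing : IntervalIntegrable (fun x : ℝ => (1 - x) ^ α) volume 0 1 := by
      simpa using (intervalIntegral.intervalIntegrable_rpow' (a := 1) (b := 0) hα).comp_sub_left 1
    refine (hsing.continuousOn_mul f.continuousOn).mul_continuousOn
      (.rpow_const (by fun_prop) fun x hx => ?_)
    rw [Set.uIcc_of_le (by norm_num)] at hx
    exact .inl (by linarith [hx.1])
  exact hleft.trans hright

theorem integrableOn_eval_mul_jacobiWeight (hα : -1 < α) (hβ : -1 < β) (f : ℝ[X]) :
    IntegrableOn (fun x => f.eval x * (1 - x) ^ α * (1 + x) ^ β) (Set.Ioo (-1) 1) :=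
  (intervalIntegrable_iff_integrableOn_Ioo_of_le (by norm_num)).mp
    (intervalIntegrable_eval_mul_jacobiWeight hα hβ f)

theorem jacobiIntegral_add (hα : -1 < α) (hβ : -1 < β) (f g : ℝ[X]) :
    jacobiIntegral α β (f + g) = jacobiIntegral α β f + jacobiIntegral α β g := by
  simp only [jacobiIntegral, eval_add, add_mul]
  exact integral_add (integrableOn_eval_mul_jacobiWeight hα hβ f)
    (integrableOn_eval_mul_jacobiWeight hα hβ g)

theorem jacobiIntegral_C_mul (α β c : ℝ) (f : ℝ[X]) :
    jacobiIntegral α β (C c * f) = c * jacobiIntegral α β f := by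
  simp only [jacobiIntegral, eval_mul, eval_C, mul_assoc]
  exact integral_const_mul _ _

theorem hasDerivAt_eval_mul_jacobiWeight {x : ℝ} (hx : x ∈ Set.Ioo (-1 : ℝ) 1) (f : ℝ[X]) :
    HasDerivAt (fun x => f.eval x * (1 - x) ^ (α + 1) * (1 + x) ^ (β + 1))
      (((1 - X ^ 2) * derivative f + (C (β - α) - C (α + β + 2) * X) * f).eval x *
        (1 - x) ^ α * (1 + x) ^ β) x := by
  have hsub : 1 - x ≠ 0 := by linarith [hx.2]
  have hadd : 1 + x ≠ 0 := by linarith [hx.1]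
  have hderiv := ((f.hasDerivAt x).mul
    (((hasDerivAt_id x).const_sub 1).rpow_const (p := α + 1) (.inl hsub))).mul
    (((hasDerivAt_id x).const_add 1).rpow_const (p := β + 1) (.inl hadd))
  refine hderiv.congr_deriv ?_
  simp only [id, Pi.mul_apply, add_sub_cancel_right, rpow_add_one hsub, rpow_add_one hadd,
    eval_add, eval_mul, eval_sub, eval_pow, eval_C, eval_X, eval_one]
  ring

theorem jacobiIntegral_divergence_eq_zero (hα : -1 < α) (hβ : -1 < β) (f : ℝ[X]) :
    jacobiIntegral α β ((1 - X ^ 2) * derivative f + (C (β - α) - C (α + β + 2) * X) * f) = 0 := by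
  have hα' : α + 1 ≠ 0 := by linarith
  have hβ' : β + 1 ≠ 0 := by linarith
  have hcont : ContinuousOn (fun x => f.eval x * (1 - x) ^ (α + 1) * (1 + x) ^ (β + 1))
      (Set.Icc (-1) 1) :=
    (f.continuousOn.mul (.rpow_const (by fun_prop) fun _ _ => .inr (by linarith))).mul
      (.rpow_const (by fun_prop) fun _ _ => .inr (by linarith))
  rw [jacobiIntegral, ← integral_Ioc_eq_integral_Ioo,
    ← intervalIntegral.integral_of_le (by norm_num),
    intervalIntegral.integral_eq_sub_of_hasDerivAt_of_le (by norm_num) hcont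
      (fun x hx => hasDerivAt_eval_mul_jacobiWeight hx f)
      (intervalIntegrable_eval_mul_jacobiWeight hα hβ _)]
  simp [zero_rpow hα', zero_rpow hβ']

theorem jacobiIntegral_jacobiOperator_mul (hα : -1 < α) (hβ : -1 < β) (f g : ℝ[X]) :
    jacobiIntegral α β (jacobiOperator α β f * g) =
      jacobiIntegral α β (f * jacobiOperator α β g) := by
  let w := derivative f * g - f * derivative g
  have hgreen : jacobiOperator α β f * g = f * jacobiOperator α β g +
      ((1 - X ^ 2) * derivative w + (C (β - α) - C (α + β + 2) * X) * w) := by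
    simp only [w, jacobiOperator_apply, derivative_sub, derivative_mul]
    ring
  rw [hgreen, jacobiIntegral_add hα hβ, jacobiIntegral_divergence_eq_zero hα hβ, add_zero]

theorem eq_zero_of_jacobiIntegral_mul_self_eq_zero (hα : -1 < α) (hβ : -1 < β) {f : ℝ[X]}
    (hf : jacobiIntegral α β (f * f) = 0) : f = 0 := by
  have hweight {x : ℝ} (hx : x ∈ Set.Ioo (-1 : ℝ) 1) : 0 < (1 - x) ^ α * (1 + x) ^ β :=
    mul_pos (rpow_pos_of_pos (by linarith [hx.2]) _) (rpow_pos_of_pos (by linarith [hx.1]) _)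
  have hnonneg : 0 ≤ᵐ[volume.restrict (Set.Ioo (-1) 1)]
      fun x => (f * f).eval x * (1 - x) ^ α * (1 + x) ^ β := by
    filter_upwards [ae_restrict_mem measurableSet_Ioo] with x hx
    rw [Pi.zero_apply, eval_mul, mul_assoc]
    exact mul_nonneg (mul_self_nonneg _) (hweight hx).le
  have hae : f.eval =ᵐ[volume.restrict (Set.Ioo (-1) 1)] 0 := by
    filter_upwards [ae_restrict_mem measurableSet_Ioo,
      (setIntegral_eq_zero_iff_of_nonneg_ae hnonneg
        (integrableOn_eval_mul_jacobiWeight hα hβ _)).mp hf] with x hx hfx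
    rw [Pi.zero_apply, mul_assoc, eval_mul] at hfx
    exact mul_self_eq_zero.mp ((mul_eq_zero.mp hfx).resolve_right (hweight hx).ne')
  have hzero : Set.EqOn f.eval 0 (Set.Ioo (-1) 1) :=
    Measure.eqOn_open_of_ae_eq hae isOpen_Ioo f.continuousOn continuousOn_const
  exact eq_zero_of_infinite_isRoot f
    ((Set.Ioo_infinite (by norm_num : (-1 : ℝ) < 1)).mono fun x hx => hzero hx)

theorem jacobiOperator_add_eq_zero_of_orthogonal (hα : -1 < α) (hβ : -1 < β) {P : ℝ[X]}
    (hdeg : P.degree ≤ n) (horth : ∀ Q : ℝ[X], Q.degree < n → jacobiIntegral α β (P * Q) = 0) :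
    jacobiOperator α β P + C (n * (n + α + β + 1)) * P = 0 := by
  set r := jacobiOperator α β P + C (n * (n + α + β + 1)) * P with hr
  have hrdeg : r.degree < n := degree_jacobiOperator_add_lt hdeg
  refine eq_zero_of_jacobiIntegral_mul_self_eq_zero hα hβ ?_
  nth_rewrite 1 [hr]
  rw [add_mul, jacobiIntegral_add hα hβ, jacobiIntegral_jacobiOperator_mul hα hβ,
    horth _ (degree_jacobiOperator_lt hrdeg), mul_assoc, jacobiIntegral_C_mul, horth r hrdeg,
    mul_zero, add_zero]

theorem isMonicJacobi_nodal_of_orthogonal (hα : -1 < α) (hβ : -1 < β) {P : ℝ[X]}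
    (hdeg : P.degree = n) (horth : ∀ Q : ℝ[X], Q.degree < n → jacobiIntegral α β (P * Q) = 0)
    {z : Fin n → ℝ} (hz : Function.Injective z) (hroot : ∀ i, P.eval (z i) = 0) :
    IsMonicJacobi n α β (Lagrange.nodal univ z) where
  monic := Lagrange.nodal_monic
  natDegree_eq := by simp
  jacobiOperator_add_eq_zero := by
    obtain ⟨c, hc, rfl⟩ := exists_eq_C_mul_nodal (s := univ) hz.injOn (by simpa using hdeg)
      fun i _ => hroot i
    have hode := jacobiOperator_add_eq_zero_of_orthogonal hα hβ hdeg.le horth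
    rw [← smul_eq_C_mul, map_smul, mul_smul_comm, ← smul_add] at hode
    exact (smul_eq_zero.mp hode).resolve_left hc

end JacobiIntegral

section ValueAtZeros

open Polynomial

variable {α β : ℝ} {n : ℕ}

theorem jacobi_denominator_pos (hα : -1 < α) (hβ : -1 < β) {j : ℕ} (hj : j < n) :
    0 < (n : ℝ) + α + β + j + 1 := by
  have hn : (j : ℝ) + 1 ≤ n := by exact_mod_cast hj
  linarith [(j.cast_nonneg : (0 : ℝ) ≤ j)]

theorem pow_div_pow_mul_div_rpow_mul_div_rpow {a b c s : ℝ} (ha : 0 < a) (hb : 0 < b) (hc : 0 < c)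
    (hs : 0 < s) (k m : ℕ) (x y : ℝ) :
    (c * a * (c * b)) ^ k / s ^ m * ((c * a / s) ^ x * (c * b / s) ^ y) =
      c ^ (2 * k + (x + y)) * (a ^ (x + k) * b ^ (y + k) / s ^ (m + x + y)) := by
  have hc_pow : c ^ (2 * k : ℝ) = c ^ k * c ^ k := by
    rw [two_mul, rpow_add hc, rpow_natCast]
  rw [div_rpow (by positivity) hs.le, div_rpow (by positivity) hs.le, mul_rpow hc.le ha.le,
    mul_rpow hc.le hb.le, rpow_add hc, rpow_add hc, hc_pow, rpow_add ha, rpow_add hb,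
    rpow_add hs, rpow_add hs, rpow_natCast, rpow_natCast, rpow_natCast]
  ring

theorem prod_range_rpow_two_mul_add {c : ℝ} (hc : 0 < c) (n : ℕ) (x : ℝ) :
    ∏ j ∈ range n, c ^ (2 * j + x) = c ^ (n * (n + x - 1)) := by
  induction n with
  | zero => simp
  | succ n ih =>
    rw [prod_range_succ, ih, ← rpow_add hc]
    push_cast; ring_nf

theorem IsMonicJacobi.discr_mul_eval_rpow {p : ℝ[X]} (hp : IsMonicJacobi n α β p) (hα : -1 < α)
    (hβ : -1 < β) :
    p.discr * (p.eval 1 ^ (α + 1) * ((-1) ^ n * p.eval (-1)) ^ (β + 1)) =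
      2 ^ (n * (n + α + β + 1)) * ∏ j ∈ range n,
        ((j : ℝ) + 1) ^ ((j : ℝ) + 1) * (α + j + 1) ^ (α + j + 1) * (β + j + 1) ^ (β + j + 1) /
          (n + α + β + j + 1) ^ (n + α + β + j + 1) := by
  have hα_pos (j : ℕ) : 0 < α + j + 1 := by linarith [(j.cast_nonneg : (0 : ℝ) ≤ j)]
  have hβ_pos (j : ℕ) : 0 < β + j + 1 := by linarith [(j.cast_nonneg : (0 : ℝ) ≤ j)]
  have hden_pos (j : ℕ) (hj : j ∈ range n) : 0 < n + α + β + j + 1 :=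
    jacobi_denominator_pos hα hβ (mem_range.mp hj)
  have hne (j : ℕ) (hj : j ∈ range n) : n + α + β + j + 1 ≠ 0 := (hden_pos j hj).ne'
  have htwo : (2 : ℝ) ^ (n * (n + α + β + 1)) =
      ∏ j ∈ range n, 2 ^ (2 * (j : ℝ) + (α + 1 + (β + 1))) := by
    rw [prod_range_rpow_two_mul_add two_pos]
    ring_nf
  rw [hp.eval_one_eq_prod hne, hp.neg_one_pow_mul_eval_neg_one_eq_prod hne, hp.discr_eq_prod hne,
    htwo,
    ← finsetProd_rpow _ _ fun j hj => (div_pos (mul_pos two_pos (hα_pos j)) (hden_pos j hj)).le,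
    ← finsetProd_rpow _ _ fun j hj => (div_pos (mul_pos two_pos (hβ_pos j)) (hden_pos j hj)).le]
  simp_rw [← prod_mul_distrib]
  refine prod_congr rfl fun j hj => ?_
  have hexp : ((n + j - 1 : ℕ) : ℝ) + (α + 1) + (β + 1) = n + α + β + j + 1 := by
    have hn := mem_range.mp hj
    rw [Nat.cast_sub (by lia)]
    push_cast; ring
  rw [mul_assoc,
    pow_div_pow_mul_div_rpow_mul_div_rpow (hα_pos j) (hβ_pos j) two_pos (hden_pos j hj), hexp,
    add_right_comm α 1 (j : ℝ), add_right_comm β 1 (j : ℝ), ← rpow_natCast, Nat.cast_add_one]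
  ring

theorem rpow_half_sq {x : ℝ} (hx : 0 ≤ x) (s : ℝ) : (x ^ (s / 2)) ^ 2 = x ^ s := by
  rw [← rpow_mul_natCast hx, Nat.cast_ofNat, div_mul_cancel₀ _ two_ne_zero]

theorem sq_prod_sub_mul_prod_rpow_half {z : Fin n → ℝ} (hz : ∀ i, z i ∈ Set.Icc (-1 : ℝ) 1)
    (x y : ℝ) :
    ((∏ p : Fin n × Fin n with p.1 < p.2, (z p.2 - z p.1)) *
      ∏ i, ((1 - z i) ^ (x / 2) * (1 + z i) ^ (y / 2))) ^ 2 =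
    (Lagrange.nodal univ z).discr * ((Lagrange.nodal univ z).eval 1 ^ x *
      ((-1) ^ n * (Lagrange.nodal univ z).eval (-1)) ^ y) := by
  have hsub (i : Fin n) : 0 ≤ 1 - z i := by linarith [(hz i).2]
  have hadd (i : Fin n) : 0 ≤ 1 + z i := by linarith [(hz i).1]
  rw [discr_nodal, Lagrange.eval_nodal, neg_one_pow_mul_eval_neg_one_nodal, mul_pow,
    prod_filter_fst_lt_snd fun i j => z j - z i, ← finsetProd_rpow _ _ fun i _ => hsub i,
    ← finsetProd_rpow _ _ fun i _ => hadd i, ← prod_mul_distrib]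
  refine congrArg _ ((prod_pow ..).symm.trans (prod_congr rfl fun i _ => ?_))
  rw [mul_pow, rpow_half_sq (hsub i), rpow_half_sq (hadd i)]

theorem IsMonicJacobi.prod_sub_mul_prod_rpow_half {z : Fin n → ℝ}
    (hp : IsMonicJacobi n α β (Lagrange.nodal univ z)) (hα : -1 < α) (hβ : -1 < β)
    (hmono : Monotone z) (hz : ∀ i, z i ∈ Set.Icc (-1 : ℝ) 1) :
    (∏ p : Fin n × Fin n with p.1 < p.2, (z p.2 - z p.1)) *
        ∏ i, ((1 - z i) ^ ((α + 1) / 2) * (1 + z i) ^ ((β + 1) / 2)) =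
      2 ^ (n * (n + α + β + 1) / 2) * ∏ j ∈ range n,
        ((j : ℝ) + 1) ^ (((j : ℝ) + 1) / 2) * (α + j + 1) ^ ((α + j + 1) / 2) *
          (β + j + 1) ^ ((β + j + 1) / 2) /
          (n + α + β + j + 1) ^ ((n + α + β + j + 1) / 2) := by
  have hα_nonneg (j : ℕ) : 0 ≤ α + j + 1 := by linarith [(j.cast_nonneg : (0 : ℝ) ≤ j)]
  have hβ_nonneg (j : ℕ) : 0 ≤ β + j + 1 := by linarith [(j.cast_nonneg : (0 : ℝ) ≤ j)]
  have hden_nonneg {j : ℕ} (hj : j ∈ range n) : 0 ≤ n + α + β + j + 1 :=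
    (jacobi_denominator_pos hα hβ (mem_range.mp hj)).le
  have hlhs : 0 ≤ (∏ p : Fin n × Fin n with p.1 < p.2, (z p.2 - z p.1)) *
      ∏ i, ((1 - z i) ^ ((α + 1) / 2) * (1 + z i) ^ ((β + 1) / 2)) :=
    mul_nonneg
      (prod_nonneg fun p hp => sub_nonneg.mpr (hmono (mem_filter.mp hp).2.le))
      (prod_nonneg fun i _ => mul_nonneg (rpow_nonneg (by linarith [(hz i).2]) _)
        (rpow_nonneg (by linarith [(hz i).1]) _))
  refine (sq_eq_sq₀ hlhs (mul_nonneg (by positivity) (prod_nonneg fun j hj => ?_))).mp ?_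
  · have := hα_nonneg j
    have := hβ_nonneg j
    have := hden_nonneg hj
    positivity
  · rw [sq_prod_sub_mul_prod_rpow_half hz, hp.discr_mul_eval_rpow hα hβ, mul_pow,
      rpow_half_sq two_pos.le, ← prod_pow]
    refine congrArg _ (prod_congr rfl fun j hj => ?_)
    rw [div_pow, mul_pow, mul_pow, rpow_half_sq (by positivity), rpow_half_sq (hα_nonneg j),
      rpow_half_sq (hβ_nonneg j), rpow_half_sq (hden_nonneg hj)]

end ValueAtZeros

theorem jacobi_phi_value_at_zeros_general
    (N : ℕ) (α β : ℝ) (hα : -1 < α) (hβ : -1 < β)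
    (P : Polynomial ℝ) (hPdeg : P.natDegree = N)
    (hPorth : ∀ Q : Polynomial ℝ, Q.natDegree < N →
      ∫ x in Set.Ioo (-1 : ℝ) 1,
        P.eval x * Q.eval x * (1 - x) ^ α * (1 + x) ^ β = 0)
    (z : Fin N → ℝ) (hzmono : StrictMono z)
    (hzroot : ∀ i, P.eval (z i) = 0)
    (hzmem : ∀ i, z i ∈ Set.Ioo (-1 : ℝ) 1) :
    (∏ p ∈ Finset.univ.filter (fun p : Fin N × Fin N => p.1 < p.2), (z p.2 - z p.1)) *
        ∏ j, ((1 - z j) ^ ((α + 1) / 2) * (1 + z j) ^ ((β + 1) / 2)) =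
      (2 : ℝ) ^ ((N : ℝ) * ((N : ℝ) + α + β + 1) / 2) *
      ∏ j ∈ Finset.range N,
        ((j : ℝ) + 1) ^ (((j : ℝ) + 1) / 2) *
          (α + (j : ℝ) + 1) ^ ((α + (j : ℝ) + 1) / 2) *
          (β + (j : ℝ) + 1) ^ ((β + (j : ℝ) + 1) / 2) /
          ((N : ℝ) + α + β + (j : ℝ) + 1) ^ (((N : ℝ) + α + β + (j : ℝ) + 1) / 2) := by
  rcases N.eq_zero_or_pos with rfl | hN
  · simp
  have hdeg : P.degree = N := (Polynomial.degree_eq_iff_natDegree_eq_of_pos hN).mpr hPdeg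
  have horth (Q : Polynomial ℝ) (hQ : Q.degree < N) : jacobiIntegral α β (P * Q) = 0 := by
    have hQnat : Q.natDegree < N := by
      rcases eq_or_ne Q 0 with rfl | hQ0
      · simpa using hN
      · exact (Polynomial.natDegree_lt_iff_degree_lt hQ0).mpr hQ
    simpa only [jacobiIntegral, Polynomial.eval_mul] using hPorth Q hQnat
  exact (isMonicJacobi_nodal_of_orthogonal hα hβ hdeg horth hzmono.injective
    hzroot).prod_sub_mul_prod_rpow_half hα hβ hzmono.monotone
      fun i => Set.Ioo_subset_Icc_self (hzmem i)

theorem jacobi_phi_value_at_zeros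
    (N : ℕ) (hN : 1 ≤ N) (a b : ℝ) (ha : 0 ≤ a) (hb : 0 < b)
    (α β : ℝ) (hα : α = a + b - 1) (hβ : β = b - 1)
    (P : Polynomial ℝ) (hPdeg : P.natDegree = N)
    (hPorth : ∀ Q : Polynomial ℝ, Q.natDegree < N →
      ∫ x in Set.Ioo (-1 : ℝ) 1,
        P.eval x * Q.eval x * (1 - x) ^ α * (1 + x) ^ β = 0)
    (hPone : P.eval 1 = (∏ j ∈ Finset.range N, (α + 1 + j)) / (N.factorial : ℝ))
    (z : Fin N → ℝ) (hzmono : StrictMono z)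
    (hzroot : ∀ i, P.eval (z i) = 0)
    (hzmem : ∀ i, z i ∈ Set.Ioo (-1 : ℝ) 1)
    (φ : (Fin N → ℝ) → ℝ)
    (hφ : φ = fun x =>
      (∏ p ∈ Finset.univ.filter (fun p : Fin N × Fin N => p.1 < p.2), (x p.2 - x p.1)) *
      ∏ j, ((1 - x j) ^ ((a + b) / 2) * (1 + x j) ^ (b / 2)))
    : φ z = (2 : ℝ) ^ ((N : ℝ) * ((N : ℝ) + α + β + 1) / 2) *
      ∏ j ∈ Finset.range N,
        ((j : ℝ) + 1) ^ (((j : ℝ) + 1) / 2) *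
          (α + (j : ℝ) + 1) ^ ((α + (j : ℝ) + 1) / 2) *
          (β + (j : ℝ) + 1) ^ ((β + (j : ℝ) + 1) / 2) /
          ((N : ℝ) + α + β + (j : ℝ) + 1) ^ (((N : ℝ) + α + β + (j : ℝ) + 1) / 2) := by
  subst hα hβ hφ
  simpa only [sub_add_cancel] using jacobi_phi_value_at_zeros_general N (a + b - 1) (b - 1)
    (by linarith) (by linarith) P hPdeg hPorth z hzmono hzroot hzmem
end

section
/- Let N ≥ 1, a ≥ 0, b > 0, and set α = a+b−1 and β = b−1. For each κ > 0 let X_κ be a random vector with distribution μ_κ (the β-Jacobi ensemble), and let z = (z_1,...,z_N), where z_1 < ... < z_N are the ordered zeros of the Jacobi polynomial P_N^{(α,β)}. Then the N×N matrix S with entries s_{j,j} = Σ_{l≠j} 1/(z_j−z_l)² + (a+b)/2 · 1/(1−z_j)² + b/2 · 1/(1+z_j)² and s_{i,j} = −1/(z_i−z_j)² for i ≠ j is positive definite, and √κ·(X_κ − z) converges in distribution as κ → ∞ to the centered N-dimensional normal distribution with covariance matrix S^{−1}. -/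
open MeasureTheory Filter Real Finset Topology

/-!
The density of `μ_κ` is a product of powers of affine functions of `x`: the distances between the
points and from the points to the walls `±1`. Dividing each affine function by its value at the
vector `z` of zeros gives, up to a constant, `∏ k, (1 + ℓ k (x - z)) ^ (κ * c k + e k)` with linear
forms `ℓ k` and `c k > 0`.

The zeros satisfy Stieltjes' electrostatic equations. Put `Q = P / (X - z j)` and write `Λ` for
integration against the Jacobi weight. Orthogonality of `P` gives `Λ (Q * G) = G (z j) * Λ Q` for
`deg G ≤ N`, while integration by parts gives `Λ (σ * R.derivative + τ * R) = 0` for every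
polynomial `R`, where `σ = 1 - X²` and `τ` has degree at most one. For `R = Q²` the two say that
`2 * σ * Q.derivative + τ * Q` vanishes at `z j`. In terms of the forms this is the balance
condition `∑ k, c k • ℓ k = 0`.

Balance kills the linear term of `κ * ∑ k, c k * log (1 + ℓ k (y / √κ))`, which therefore tends to
`-(∑ k, c k * ℓ k y ^ 2) / 2`; this quadratic form is the one of `S`. Balance also bounds every
`1 + ℓ k` on the alcove, where `log t ≤ t - 1 - (t - 1)² / C` then supplies a Gaussian majorant, and
dominated convergence gives the limit of numerator and denominator.
-/

section Asymptotics

lemma isLittleO_log_one_add_sub_taylor :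
    (fun s : ℝ => log (1 + s) - (s - s ^ 2 / 2)) =o[𝓝 0] fun s => s ^ 2 := by
  have hcube : (fun s : ℝ => log (1 + s) - (s - s ^ 2 / 2)) =O[𝓝 0] fun s => s ^ 3 := by
    refine Asymptotics.IsBigO.of_bound 2 ?_
    filter_upwards [Metric.ball_mem_nhds (0 : ℝ) one_half_pos] with s hs
    rw [mem_ball_zero_iff, norm_eq_abs] at hs
    calc ‖log (1 + s) - (s - s ^ 2 / 2)‖
        = |∑ i ∈ range 2, (-s) ^ (i + 1) / (i + 1) + log (1 - -s)| := by
          rw [norm_eq_abs]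
          congr 1
          simp only [sum_range_succ, sum_range_zero, sub_neg_eq_add, Nat.cast_zero, Nat.cast_one]
          ring
      _ ≤ |-s| ^ 3 / (1 - |-s|) :=
          abs_log_sub_add_sum_range_le (by rw [abs_neg]; linarith) 2
      _ ≤ 2 * ‖s ^ 3‖ := by
          rw [abs_neg, norm_pow, norm_eq_abs, div_le_iff₀ (by linarith)]
          nlinarith [pow_nonneg (abs_nonneg s) 3]
  exact hcube.trans_isLittleO (Asymptotics.isLittleO_pow_pow (by norm_num))

lemma tendsto_const_div_sqrt_atTop (u : ℝ) : Tendsto (fun κ : ℝ => u / √κ) atTop (𝓝 0) :=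
  tendsto_const_nhds.div_atTop tendsto_sqrt_atTop

lemma tendsto_mul_log_one_add_div_sqrt_sub (u : ℝ) :
    Tendsto (fun κ : ℝ => κ * log (1 + u / √κ) - √κ * u) atTop (𝓝 (-(u ^ 2 / 2))) := by
  have hlog : Tendsto (fun κ : ℝ => κ * (log (1 + u / √κ) - (u / √κ - (u / √κ) ^ 2 / 2)))
      atTop (𝓝 0) := by
    rw [← Asymptotics.isLittleO_one_iff ℝ]
    have hcomp := isLittleO_log_one_add_sub_taylor.comp_tendsto (tendsto_const_div_sqrt_atTop u)
    refine ((Asymptotics.isBigO_refl (fun κ : ℝ => κ) atTop).mul_isLittleO hcomp).trans_isBigO ?_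
    refine (Asymptotics.isBigO_const_const (u ^ 2) one_ne_zero atTop).congr' ?_ .rfl
    filter_upwards [eventually_gt_atTop 0] with κ hκ
    rw [Function.comp_apply, div_pow, sq_sqrt hκ.le, mul_div_cancel₀ _ hκ.ne']
  rw [← zero_sub]
  refine (hlog.sub_const (u ^ 2 / 2)).congr' ?_
  filter_upwards [eventually_gt_atTop 0] with κ hκ
  have hsqrt : √κ ≠ 0 := (sqrt_pos.mpr hκ).ne'
  have hlin : κ * (u / √κ) = √κ * u := by
    rw [mul_div_assoc', div_eq_iff hsqrt, mul_right_comm, mul_self_sqrt hκ.le]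
  have hquad : κ * (u / √κ) ^ 2 = u ^ 2 := by
    rw [div_pow, sq_sqrt hκ.le, mul_div_cancel₀ _ hκ.ne']
  linear_combination hquad / 2 - hlin

lemma tendsto_one_add_div_sqrt_rpow_mul_exp (u c e : ℝ) :
    Tendsto (fun κ : ℝ => (1 + u / √κ) ^ (κ * c + e) * exp (-(√κ * (c * u)))) atTop
      (𝓝 (exp (-(c * u ^ 2 / 2)))) := by
  have hbase : Tendsto (fun κ : ℝ => 1 + u / √κ) atTop (𝓝 1) := by
    simpa using (tendsto_const_div_sqrt_atTop u).const_add 1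
  have hlog : Tendsto (fun κ : ℝ => log (1 + u / √κ)) atTop (𝓝 0) := by
    simpa using hbase.log one_ne_zero
  have hexponent := ((tendsto_mul_log_one_add_div_sqrt_sub u).const_mul c).add (hlog.const_mul e)
  rw [show c * -(u ^ 2 / 2) + e * 0 = -(c * u ^ 2 / 2) by ring] at hexponent
  refine ((continuous_exp.tendsto _).comp hexponent).congr' ?_
  filter_upwards [hbase.eventually_const_lt one_pos] with κ hpos
  rw [Function.comp_apply, rpow_def_of_pos hpos, ← exp_add]
  ring_nf

lemma le_exp_sub_one_sub_sq_div {t : ℝ} (ht : 0 ≤ t) :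
    t ≤ exp (t - 1 - (t - 1) ^ 2 / (2 * (1 + t))) := by
  obtain ⟨r, hr, rfl⟩ : ∃ r : ℝ, 0 ≤ r ∧ t = r ^ 2 := ⟨√t, sqrt_nonneg t, (sq_sqrt ht).symm⟩
  have hquad : (r ^ 2 - 1) ^ 2 / (2 * (1 + r ^ 2)) ≤ (r - 1) ^ 2 := by
    rw [div_le_iff₀ (by positivity)]
    nlinarith [sq_nonneg ((r - 1) ^ 2)]
  calc r ^ 2 ≤ exp (r - 1) ^ 2 := pow_le_pow_left₀ hr (by linarith [add_one_le_exp (r - 1)]) 2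
    _ = exp (r ^ 2 - 1 - (r - 1) ^ 2) := by rw [← exp_nat_mul]; ring_nf
    _ ≤ exp (r ^ 2 - 1 - (r ^ 2 - 1) ^ 2 / (2 * (1 + r ^ 2))) := by gcongr

lemma rpow_le_exp_mul_sub_one_sub_sq_div {t M p : ℝ} (ht : 0 ≤ t) (htM : t ≤ M) (hp : 0 ≤ p) :
    t ^ p ≤ exp (p * (t - 1) - p * (t - 1) ^ 2 / (2 * (1 + M))) := by
  calc t ^ p ≤ exp (t - 1 - (t - 1) ^ 2 / (2 * (1 + t))) ^ p :=
        rpow_le_rpow ht (le_exp_sub_one_sub_sq_div ht) hp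
    _ ≤ exp (t - 1 - (t - 1) ^ 2 / (2 * (1 + M))) ^ p := by gcongr
    _ = exp (p * (t - 1) - p * (t - 1) ^ 2 / (2 * (1 + M))) := by rw [← exp_mul]; ring_nf

end Asymptotics

section AffinePowers

variable {ι E : Type*} [NormedAddCommGroup E] [NormedSpace ℝ E]

/-- The polytope cut out by the affine forms `1 + ℓ k`, each normalised to take the value `1` at
the interior point `0`. -/
def affinePolytope (ℓ : ι → E →L[ℝ] ℝ) : Set E :=
  {x | ∀ k, 0 ≤ 1 + ℓ k x}

variable {ℓ : ι → E →L[ℝ] ℝ} {c : ι → ℝ}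

lemma isClosed_affinePolytope : IsClosed (affinePolytope ℓ) := by
  simp only [affinePolytope, Set.ofPred_forall]
  exact isClosed_iInter fun k => isClosed_le continuous_const (by fun_prop)

lemma affinePolytope_mem_nhds_zero [Finite ι] : affinePolytope ℓ ∈ 𝓝 (0 : E) := by
  refine eventually_all.mpr fun k => ?_
  have hcont : Tendsto (fun x => 1 + ℓ k x) (𝓝 0) (𝓝 1) := by
    simpa using (show Continuous fun x => 1 + ℓ k x by fun_prop).tendsto 0
  exact (hcont.eventually_const_lt one_pos).mono fun x hx => hx.le

lemma eventually_nonneg_smul_add [Finite ι] (hc : ∀ k, 0 < c k) (e : ι → ℝ) :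
    ∀ᶠ κ : ℝ in atTop, 0 ≤ κ • c + e := by
  refine eventually_all.mpr fun k => Tendsto.eventually_ge_atTop ?_ 0
  exact tendsto_atTop_add_const_right _ (e k) (tendsto_id.atTop_mul_const (hc k))

variable [Fintype ι]

/-- The product of powers `∏ k, (1 + ℓ k x) ^ p k`, an unnormalised density on
`affinePolytope ℓ`. -/
noncomputable def affinePowerProd (ℓ : ι → E →L[ℝ] ℝ) (p : ι → ℝ) (x : E) : ℝ :=
  ∏ k, (1 + ℓ k x) ^ p k

/-- The Hessian at `0` of `x ↦ -∑ k, c k * log (1 + ℓ k x)`, as a quadratic form. -/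
def logBarrierHessian (c : ι → ℝ) (ℓ : ι → E →L[ℝ] ℝ) (y : E) : ℝ :=
  ∑ k, c k * ℓ k y ^ 2

lemma measurable_affinePowerProd [MeasurableSpace E] [BorelSpace E] (p : ι → ℝ) :
    Measurable (affinePowerProd ℓ p) :=
  Finset.measurable_prod _ fun k _ =>
    (show Continuous fun x => 1 + ℓ k x by fun_prop).measurable.pow_const _

lemma affinePowerProd_nonneg (p : ι → ℝ) {x : E} (hx : x ∈ affinePolytope ℓ) :
    0 ≤ affinePowerProd ℓ p x :=
  prod_nonneg fun k _ => rpow_nonneg (hx k) _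

lemma affinePowerProd_add {p q : ι → ℝ} (hp : 0 ≤ p) (hq : 0 ≤ q) {x : E}
    (hx : x ∈ affinePolytope ℓ) :
    affinePowerProd ℓ (p + q) x = affinePowerProd ℓ p x * affinePowerProd ℓ q x := by
  simp only [affinePowerProd, ← prod_mul_distrib]
  exact prod_congr rfl fun k _ => rpow_add_of_nonneg (hx k) (hp k) (hq k)

lemma affinePowerProd_le {p : ι → ℝ} (hp : 0 ≤ p) {M : ℝ} {x : E} (hx : x ∈ affinePolytope ℓ)
    (hM : ∀ k, 1 + ℓ k x ≤ M) : affinePowerProd ℓ p x ≤ ∏ k, M ^ p k :=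
  prod_le_prod (fun k _ => rpow_nonneg (hx k) _) fun k _ => rpow_le_rpow (hx k) (hM k) (hp k)

lemma logBarrierHessian_smul (t : ℝ) (y : E) :
    logBarrierHessian c ℓ (t • y) = t ^ 2 * logBarrierHessian c ℓ y := by
  simp only [logBarrierHessian, map_smul, smul_eq_mul, mul_sum]
  exact sum_congr rfl fun k _ => by ring

lemma continuous_logBarrierHessian : Continuous (logBarrierHessian c ℓ) :=
  continuous_finsetSum _ fun k _ => by fun_prop

lemma sum_mul_apply_eq_zero (hbal : ∑ k, c k • ℓ k = 0) (x : E) : ∑ k, c k * ℓ k x = 0 := by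
  simpa using DFunLike.congr_fun hbal x

/- The balance condition makes `∑ k, c k * (1 + ℓ k x)` constant, so the nonnegative forms are
uniformly bounded on the polytope. -/
lemma one_add_le_sum_div (hc : ∀ k, 0 < c k) (hbal : ∑ k, c k • ℓ k = 0) {x : E}
    (hx : x ∈ affinePolytope ℓ) (k : ι) : 1 + ℓ k x ≤ (∑ j, c j) / c k := by
  rw [le_div_iff₀ (hc k), mul_comm]
  calc c k * (1 + ℓ k x) ≤ ∑ j, c j * (1 + ℓ j x) :=
        single_le_sum (f := fun j => c j * (1 + ℓ j x))
          (fun j _ => mul_nonneg (hc j).le (hx j)) (mem_univ k)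
    _ = ∑ j, c j := by simp [mul_add, sum_add_distrib, sum_mul_apply_eq_zero hbal]

lemma exists_one_add_le (hc : ∀ k, 0 < c k) (hbal : ∑ k, c k • ℓ k = 0) :
    ∃ M : ℝ, 0 ≤ M ∧ ∀ x ∈ affinePolytope ℓ, ∀ k, 1 + ℓ k x ≤ M := by
  have hnonneg : ∀ k, 0 ≤ (∑ j, c j) / c k := fun k =>
    div_nonneg (sum_nonneg fun j _ => (hc j).le) (hc k).le
  refine ⟨∑ k, (∑ j, c j) / c k, sum_nonneg fun k _ => hnonneg k, fun x hx k => ?_⟩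
  exact (one_add_le_sum_div hc hbal hx k).trans
    (single_le_sum (f := fun k => (∑ j, c j) / c k) (fun k _ => hnonneg k) (mem_univ k))

lemma affinePowerProd_smul_le_exp (hc : ∀ k, 0 < c k) (hbal : ∑ k, c k • ℓ k = 0) {v M : ℝ}
    (hv : 0 ≤ v) {x : E} (hx : x ∈ affinePolytope ℓ) (hM : ∀ k, 1 + ℓ k x ≤ M) :
    affinePowerProd ℓ (v • c) x ≤ exp (-(v * logBarrierHessian c ℓ x / (2 * (1 + M)))) := by
  calc affinePowerProd ℓ (v • c) x
      ≤ ∏ k, exp (v * (c k * ℓ k x) - v / (2 * (1 + M)) * (c k * ℓ k x ^ 2)) := by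
        refine prod_le_prod (fun k _ => rpow_nonneg (hx k) _) fun k _ => ?_
        refine (rpow_le_exp_mul_sub_one_sub_sq_div (hx k) (hM k)
          (mul_nonneg hv (hc k).le)).trans_eq ?_
        congr 1
        ring
    _ = exp (-(v * logBarrierHessian c ℓ x / (2 * (1 + M)))) := by
        rw [← exp_sum, sum_sub_distrib, ← mul_sum, ← mul_sum, sum_mul_apply_eq_zero hbal,
          logBarrierHessian]
        ring_nf

lemma affinePowerProd_inv_sqrt_smul_le_exp (hc : ∀ k, 0 < c k) (hbal : ∑ k, c k • ℓ k = 0)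
    {e : ι → ℝ} {κ₀ κ M : ℝ} (hκ₀ : 0 < κ₀) (he : 0 ≤ κ₀ • c + e) (hκ : 2 * κ₀ ≤ κ) {y : E}
    (hM₀ : 0 ≤ M) (hy : (√κ)⁻¹ • y ∈ affinePolytope ℓ) (hM : ∀ k, 1 + ℓ k ((√κ)⁻¹ • y) ≤ M) :
    affinePowerProd ℓ (κ • c + e) ((√κ)⁻¹ • y) ≤
      (∏ k, M ^ (κ₀ • c + e) k) * exp (-(1 / (4 * (1 + M)) * logBarrierHessian c ℓ y)) := by
  have hκpos : 0 < κ := by linarith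
  have hexcess : 0 ≤ κ - κ₀ := by linarith
  have hhalf : 1 / 2 ≤ (κ - κ₀) / κ := by rw [le_div_iff₀ hκpos]; linarith
  have hH : 0 ≤ logBarrierHessian c ℓ y :=
    sum_nonneg fun k _ => mul_nonneg (hc k).le (sq_nonneg _)
  have hsplit : κ • c + e = (κ₀ • c + e) + (κ - κ₀) • c := by rw [sub_smul]; abel
  rw [hsplit, affinePowerProd_add he (smul_nonneg hexcess fun k => (hc k).le) hy]
  refine mul_le_mul (affinePowerProd_le he hy hM) ?_ (affinePowerProd_nonneg _ hy)
    (prod_nonneg fun k _ => rpow_nonneg hM₀ _)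
  refine (affinePowerProd_smul_le_exp hc hbal hexcess hy hM).trans (exp_le_exp.mpr ?_)
  rw [logBarrierHessian_smul, inv_pow, sq_sqrt hκpos.le, neg_le_neg_iff]
  calc 1 / (4 * (1 + M)) * logBarrierHessian c ℓ y
      = 1 / 2 * (logBarrierHessian c ℓ y / (2 * (1 + M))) := by field_simp; ring
    _ ≤ (κ - κ₀) / κ * (logBarrierHessian c ℓ y / (2 * (1 + M))) := by gcongr
    _ = (κ - κ₀) * (κ⁻¹ * logBarrierHessian c ℓ y) / (2 * (1 + M)) := by ring

lemma exists_indicator_affinePowerProd_le (hc : ∀ k, 0 < c k) (hbal : ∑ k, c k • ℓ k = 0)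
    (e : ι → ℝ) :
    ∃ C r : ℝ, 0 < r ∧ ∀ᶠ κ : ℝ in atTop, ∀ y : E,
      ‖(affinePolytope ℓ).indicator (affinePowerProd ℓ (κ • c + e)) ((√κ)⁻¹ • y)‖ ≤
        C * exp (-(r * logBarrierHessian c ℓ y)) := by
  obtain ⟨M, hM₀, hM⟩ := exists_one_add_le hc hbal
  obtain ⟨κ₀, he, hκ₀⟩ := ((eventually_nonneg_smul_add hc e).and (eventually_gt_atTop 0)).exists
  refine ⟨∏ k, M ^ (κ₀ • c + e) k, 1 / (4 * (1 + M)), by positivity, ?_⟩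
  filter_upwards [eventually_ge_atTop (2 * κ₀)] with κ hκ y
  by_cases hy : (√κ)⁻¹ • y ∈ affinePolytope ℓ
  · rw [Set.indicator_of_mem hy, norm_of_nonneg (affinePowerProd_nonneg _ hy)]
    exact affinePowerProd_inv_sqrt_smul_le_exp hc hbal hκ₀ he hκ hM₀ hy (hM _ hy)
  · rw [Set.indicator_of_notMem hy, norm_zero]
    exact mul_nonneg (prod_nonneg fun k _ => rpow_nonneg hM₀ _) (exp_pos _).le

lemma tendsto_indicator_affinePowerProd (hbal : ∑ k, c k • ℓ k = 0) (e : ι → ℝ) (y : E) :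
    Tendsto (fun κ : ℝ =>
        (affinePolytope ℓ).indicator (affinePowerProd ℓ (κ • c + e)) ((√κ)⁻¹ • y))
      atTop (𝓝 (exp (-(logBarrierHessian c ℓ y / 2)))) := by
  have hprod := tendsto_finsetProd univ fun k _ =>
    tendsto_one_add_div_sqrt_rpow_mul_exp (ℓ k y) (c k) (e k)
  have hlimit : ∏ k, exp (-(c k * ℓ k y ^ 2 / 2)) = exp (-(logBarrierHessian c ℓ y / 2)) := by
    rw [← exp_sum, sum_neg_distrib, ← sum_div, logBarrierHessian]
  have hscale : Tendsto (fun κ : ℝ => (√κ)⁻¹ • y) atTop (𝓝 0) := by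
    simpa using (tendsto_inv_atTop_zero.comp tendsto_sqrt_atTop).smul_const y
  rw [← hlimit]
  refine hprod.congr' ?_
  filter_upwards [hscale.eventually_mem (affinePolytope_mem_nhds_zero (ℓ := ℓ))] with κ hκ
  have hexp : ∏ k, exp (-(√κ * (c k * ℓ k y))) = 1 := by
    rw [← exp_sum, sum_neg_distrib, ← mul_sum, sum_mul_apply_eq_zero hbal, mul_zero, neg_zero,
      exp_zero]
  rw [Set.indicator_of_mem hκ, prod_mul_distrib, hexp, mul_one]
  simp [affinePowerProd, div_eq_inv_mul]

variable [FiniteDimensional ℝ E]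

lemma exists_mul_sq_norm_le_logBarrierHessian (hc : ∀ k, 0 < c k)
    (hker : ∀ y, (∀ k, ℓ k y = 0) → y = 0) :
    ∃ m : ℝ, 0 < m ∧ ∀ y, m * ‖y‖ ^ 2 ≤ logBarrierHessian c ℓ y := by
  let L : E →ₗ[ℝ] EuclideanSpace ℝ ι :=
    (WithLp.linearEquiv 2 ℝ (ι → ℝ)).symm.toLinearMap ∘ₗ
      LinearMap.pi fun k => √(c k) • (ℓ k).toLinearMap
  have hLapply : ∀ y k, L y k = √(c k) * ℓ k y := fun y k => rfl
  have hLnorm : ∀ y, ‖L y‖ ^ 2 = logBarrierHessian c ℓ y := fun y => by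
    rw [EuclideanSpace.norm_sq_eq]
    exact sum_congr rfl fun k _ => by
      rw [hLapply, norm_mul, mul_pow, norm_eq_abs, norm_eq_abs, sq_abs, sq_abs, sq_sqrt (hc k).le]
  have hLker : LinearMap.ker L = ⊥ := by
    refine LinearMap.ker_eq_bot'.mpr fun y hy => hker y fun k => ?_
    have hk : √(c k) * ℓ k y = 0 := by rw [← hLapply, hy]; rfl
    exact (mul_eq_zero.mp hk).resolve_left (sqrt_pos.mpr (hc k)).ne'
  obtain ⟨K, hK, hanti⟩ := L.exists_antilipschitzWith hLker
  refine ⟨((K : ℝ) ^ 2)⁻¹, by positivity, fun y => ?_⟩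
  have hbound : ‖y‖ ≤ K * ‖L y‖ := ZeroHomClass.bound_of_antilipschitz L hanti y
  rw [inv_mul_le_iff₀ (by positivity), ← hLnorm, ← mul_pow]
  gcongr

variable [MeasurableSpace E] [BorelSpace E] (μ : Measure E) [μ.IsAddHaarMeasure]

lemma integrable_exp_neg_mul_sq_norm {m : ℝ} (hm : 0 < m) :
    Integrable (fun y : E => exp (-m * ‖y‖ ^ 2)) μ := by
  rcases subsingleton_or_nontrivial E with _ | _
  · exact Integrable.of_finite
  rw [integrable_fun_norm_addHaar μ (f := fun t => exp (-m * t ^ 2))]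
  have hexponent : (-1 : ℝ) < (Module.finrank ℝ E - 1 : ℕ) :=
    neg_one_lt_zero.trans_le (by positivity)
  simpa only [rpow_natCast, smul_eq_mul] using integrableOn_rpow_mul_exp_neg_mul_sq hm hexponent

lemma integrable_exp_neg_mul_logBarrierHessian (hc : ∀ k, 0 < c k)
    (hker : ∀ y, (∀ k, ℓ k y = 0) → y = 0) {r : ℝ} (hr : 0 < r) :
    Integrable (fun y => exp (-(r * logBarrierHessian c ℓ y))) μ := by
  obtain ⟨m, hm, hle⟩ := exists_mul_sq_norm_le_logBarrierHessian hc hker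
  refine (integrable_exp_neg_mul_sq_norm μ (mul_pos hr hm)).mono' ?_ (.of_forall fun y => ?_)
  · have := continuous_logBarrierHessian (c := c) (ℓ := ℓ)
    exact Continuous.aestronglyMeasurable (by fun_prop)
  · rw [norm_of_nonneg (exp_pos _).le, neg_mul, mul_assoc]
    gcongr
    exact hle y

lemma tendsto_integral_mul_indicator_affinePowerProd (hc : ∀ k, 0 < c k)
    (hbal : ∑ k, c k • ℓ k = 0) (hker : ∀ y, (∀ k, ℓ k y = 0) → y = 0) (e : ι → ℝ)
    (f : BoundedContinuousFunction E ℝ) :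
    Tendsto (fun κ : ℝ => ∫ y, f y *
        (affinePolytope ℓ).indicator (affinePowerProd ℓ (κ • c + e)) ((√κ)⁻¹ • y) ∂μ)
      atTop (𝓝 (∫ y, f y * exp (-(logBarrierHessian c ℓ y / 2)) ∂μ)) := by
  obtain ⟨C, r, hr, hdom⟩ := exists_indicator_affinePowerProd_le hc hbal e
  refine tendsto_integral_filter_of_dominated_convergence
    (fun y => ‖f‖ * (C * exp (-(r * logBarrierHessian c ℓ y)))) (.of_forall fun κ => ?_) ?_
    (((integrable_exp_neg_mul_logBarrierHessian μ hc hker hr).const_mul C).const_mul ‖f‖)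
    (.of_forall fun y => (tendsto_indicator_affinePowerProd hbal e y).const_mul (f y))
  · have hind := (measurable_affinePowerProd (ℓ := ℓ) (κ • c + e)).indicator
      (isClosed_affinePolytope (ℓ := ℓ)).measurableSet
    exact (f.continuous.measurable.mul
      (hind.comp (measurable_const_smul (√κ)⁻¹))).aestronglyMeasurable
  · filter_upwards [hdom] with κ hκ
    refine .of_forall fun y => ?_
    rw [norm_mul]
    exact mul_le_mul (f.norm_coe_le_norm y) (hκ y) (norm_nonneg _) (norm_nonneg _)

lemma setIntegral_comp_smul_mul {R : ℝ} (hR : R ≠ 0) {s : Set E} (hs : MeasurableSet s)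
    (f g : E → ℝ) :
    ∫ x in s, f (R • x) * g x ∂μ =
      |(R ^ Module.finrank ℝ E)⁻¹| * ∫ y, f y * s.indicator g (R⁻¹ • y) ∂μ := by
  rw [← smul_eq_mul, ← Measure.integral_comp_smul, ← integral_indicator hs]
  simp only [inv_smul_smul₀ hR]
  exact integral_congr_ae (.of_forall fun x => by by_cases hx : x ∈ s <;> simp [hx])

theorem tendsto_affinePowerProd_clt (hc : ∀ k, 0 < c k)
    (hbal : ∑ k, c k • ℓ k = 0) (hker : ∀ y, (∀ k, ℓ k y = 0) → y = 0) (e : ι → ℝ)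
    (f : BoundedContinuousFunction E ℝ) :
    Tendsto (fun κ : ℝ =>
        (∫ x in affinePolytope ℓ, f (√κ • x) * affinePowerProd ℓ (κ • c + e) x ∂μ) /
          ∫ x in affinePolytope ℓ, affinePowerProd ℓ (κ • c + e) x ∂μ)
      atTop (𝓝 ((∫ y, f y * exp (-(logBarrierHessian c ℓ y / 2)) ∂μ) /
        ∫ y, exp (-(logBarrierHessian c ℓ y / 2)) ∂μ)) := by
  have hnum := tendsto_integral_mul_indicator_affinePowerProd μ hc hbal hker e f
  have hden := tendsto_integral_mul_indicator_affinePowerProd μ hc hbal hker e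
    (BoundedContinuousFunction.const E 1)
  simp only [BoundedContinuousFunction.const_apply, one_mul] at hden
  have hint : Integrable (fun y => exp (-(logBarrierHessian c ℓ y / 2))) μ := by
    simpa [div_eq_inv_mul] using
      integrable_exp_neg_mul_logBarrierHessian μ hc hker (inv_pos.mpr two_pos)
  refine (hnum.div hden (integral_exp_pos hint).ne').congr' ?_
  filter_upwards [eventually_gt_atTop 0] with κ hκ
  have hsqrt : √κ ≠ 0 := (sqrt_pos.mpr hκ).ne'
  have hrescale := setIntegral_comp_smul_mul μ hsqrt
    (isClosed_affinePolytope (ℓ := ℓ)).measurableSet (g := affinePowerProd ℓ (κ • c + e))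
  have hmass := hrescale fun _ => 1
  simp only [one_mul] at hmass
  rw [hrescale f, hmass, Pi.div_apply,
    mul_div_mul_left _ _ (abs_pos.mpr (inv_ne_zero (pow_ne_zero _ hsqrt))).ne']

end AffinePowers

section GaussianIntegral

variable {n : Type*} [Fintype n]

lemma integral_exp_neg_sum_sq_div_two :
    ∫ x : n → ℝ, exp (-(∑ i, x i ^ 2) / 2) = (2 * π) ^ ((Fintype.card n : ℝ) / 2) := by
  have hprod : ∀ x : n → ℝ, exp (-(∑ i, x i ^ 2) / 2) = ∏ i, exp (-(1 / 2) * x i ^ 2) := fun x => by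
    rw [← exp_sum, ← mul_sum]
    ring_nf
  simp only [hprod]
  rw [integral_fintype_prod_volume_eq_prod (fun (_ : n) (t : ℝ) => exp (-(1 / 2) * t ^ 2)),
    prod_const, integral_gaussian, sqrt_eq_rpow, ← rpow_mul_natCast (by positivity), card_univ]
  ring_nf

open scoped MatrixOrder in
lemma exists_transpose_mul_self_eq {S : Matrix n n ℝ} (hS : S.PosSemidef) :
    ∃ B : Matrix n n ℝ, B.transpose * B = S := by
  classical
  have hsymm : (CFC.sqrt S).transpose = CFC.sqrt S := by
    rw [← Matrix.conjTranspose_eq_transpose_of_trivial, ← Matrix.star_eq_conjTranspose]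
    exact (CFC.sqrt_nonneg S).isSelfAdjoint.star_eq
  exact ⟨CFC.sqrt S, by rw [hsymm, CFC.sqrt_mul_sqrt_self S hS.nonneg]⟩

lemma sum_sum_mul_mul_transpose_mul_self {m R : Type*} [Fintype m] [CommSemiring R]
    (B : Matrix m n R) (x : n → R) :
    ∑ i, ∑ j, x i * (B.transpose * B) i j * x j = ∑ i, B.mulVec x i ^ 2 := by
  calc ∑ i, ∑ j, x i * (B.transpose * B) i j * x j
      = x ⬝ᵥ (B.transpose * B).mulVec x := by
        simp only [dotProduct, Matrix.mulVec, mul_sum, mul_assoc]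
    _ = ∑ i, B.mulVec x i ^ 2 := by
        rw [← Matrix.mulVec_mulVec, Matrix.dotProduct_mulVec, Matrix.vecMul_transpose]
        simp only [dotProduct, sq]

variable [DecidableEq n]

lemma integral_comp_mulVec {B : Matrix n n ℝ} (hB : B.det ≠ 0) {f : (n → ℝ) → ℝ}
    (hf : Continuous f) : ∫ x, f (B.mulVec x) = |B.det|⁻¹ * ∫ x, f x := by
  have hmap := integral_map (μ := volume) (f := f)
    (LinearMap.continuous_of_finiteDimensional (Matrix.toLin' B)).measurable.aemeasurable
    hf.aestronglyMeasurable
  rw [map_matrix_volume_pi_eq_smul_volume_pi hB, integral_smul_measure,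
    ENNReal.toReal_ofReal (abs_nonneg _), abs_inv, smul_eq_mul] at hmap
  exact hmap.symm

lemma integral_exp_neg_quadratic_div_two {S : Matrix n n ℝ} (hS : S.PosDef) :
    ∫ x : n → ℝ, exp (-(∑ i, ∑ j, x i * S i j * x j) / 2) =
      (2 * π) ^ ((Fintype.card n : ℝ) / 2) / √S.det := by
  obtain ⟨B, rfl⟩ := exists_transpose_mul_self_eq hS.posSemidef
  have hdet : (B.transpose * B).det = B.det * B.det := by rw [Matrix.det_mul, Matrix.det_transpose]
  have hB : B.det ≠ 0 := fun h => hS.det_pos.ne' (by rw [hdet, h, mul_zero])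
  simp only [sum_sum_mul_mul_transpose_mul_self]
  rw [integral_comp_mulVec hB (f := fun y => exp (-(∑ i, y i ^ 2) / 2)) (by fun_prop),
    integral_exp_neg_sum_sq_div_two, hdet, sqrt_mul_self_eq_abs, inv_mul_eq_div]

lemma integral_mul_exp_neg_quadratic_div {S : Matrix n n ℝ} (hS : S.PosDef) (f : (n → ℝ) → ℝ) :
    (∫ x, f x * exp (-(∑ i, ∑ j, x i * S i j * x j) / 2)) /
        ∫ x : n → ℝ, exp (-(∑ i, ∑ j, x i * S i j * x j) / 2) =
      ∫ x, f x * ((2 * π) ^ (-(Fintype.card n : ℝ) / 2) * √S.det *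
        exp (-(∑ i, ∑ j, x i * S i j * x j) / 2)) := by
  rw [integral_exp_neg_quadratic_div_two hS, div_div_eq_mul_div, mul_div_assoc, mul_comm,
    ← integral_const_mul, neg_div, rpow_neg (by positivity)]
  exact integral_congr_ae (.of_forall fun x => by ring)

end GaussianIntegral

section Pearson

open Polynomial

variable {K : Type*} [Field K] {Λ : K[X] →ₗ[K] K} {Q : K[X]} {r : K}

lemma apply_mul_eq_eval_mul_apply
    (horth : ∀ G : K[X], G.natDegree ≤ Q.natDegree → Λ ((X - C r) * Q * G) = 0)
    {G : K[X]} (hG : G.natDegree ≤ Q.natDegree + 1) : Λ (Q * G) = G.eval r * Λ Q := by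
  have hdivmod : (X - C r) * (G /ₘ (X - C r)) = G - C (G.eval r) := by
    rw [X_sub_C_mul_divByMonic_eq_sub_modByMonic, modByMonic_X_sub_C_eq_C_eval]
  have hdeg : (G /ₘ (X - C r)).natDegree ≤ Q.natDegree := by
    rw [natDegree_divByMonic _ (monic_X_sub_C r), natDegree_X_sub_C]
    lia
  have hsplit : Q * G = G.eval r • Q + (X - C r) * Q * (G /ₘ (X - C r)) := by
    rw [smul_eq_C_mul]
    linear_combination -Q * hdivmod
  rw [hsplit, map_add, map_smul, smul_eq_mul, horth _ hdeg, add_zero]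

lemma natDegree_mul_derivative_add_mul_le {σ τ : K[X]} (hσ : σ.natDegree ≤ 2)
    (hτ : τ.natDegree ≤ 1) :
    (2 * σ * Q.derivative + τ * Q).natDegree ≤ Q.natDegree + 1 := by
  refine natDegree_add_le_of_degree_le ?_ ?_
  · rcases Nat.eq_zero_or_pos Q.natDegree with hQ | hQ
    · simp [derivative_of_natDegree_zero hQ]
    · have hderiv := natDegree_derivative_le Q
      have htwo : (2 * σ).natDegree ≤ 2 := (natDegree_C_mul_le 2 σ).trans hσ
      exact natDegree_mul_le.trans (by lia)
  · exact natDegree_mul_le.trans (by lia)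

theorem two_mul_eval_mul_eval_derivative_add_eq_zero {σ τ : K[X]}
    (hσ : σ.natDegree ≤ 2) (hτ : τ.natDegree ≤ 1)
    (hpearson : ∀ R : K[X], Λ (σ * R.derivative + τ * R) = 0)
    (horth : ∀ G : K[X], G.natDegree ≤ Q.natDegree → Λ ((X - C r) * Q * G) = 0)
    (hQ : Λ (Q * Q) ≠ 0) :
    2 * σ.eval r * Q.derivative.eval r + τ.eval r * Q.eval r = 0 := by
  have hΛQ : Λ Q ≠ 0 := fun h => hQ <| by
    rw [apply_mul_eq_eval_mul_apply horth Q.natDegree.le_succ, h, mul_zero]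
  have hsquare : σ * (Q * Q).derivative + τ * (Q * Q) =
      Q * (2 * σ * Q.derivative + τ * Q) := by
    rw [derivative_mul]
    ring
  have hzero := apply_mul_eq_eval_mul_apply horth (natDegree_mul_derivative_add_mul_le hσ hτ)
  rw [← hsquare, hpearson, eq_comm, mul_eq_zero, or_iff_left hΛQ] at hzero
  simpa using hzero

lemma eval_derivative_nodal_eq_mul_sum {ι : Type*} {s : Finset ι} {v : ι → K} {x : K}
    (hx : ∀ i ∈ s, x ≠ v i) :
    (Lagrange.nodal s v).derivative.eval x =
      (Lagrange.nodal s v).eval x * ∑ i ∈ s, 1 / (x - v i) := by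
  classical
  rw [Lagrange.derivative_nodal, eval_finsetSum, mul_sum]
  refine sum_congr rfl fun i hi => ?_
  have hne : x - v i ≠ 0 := sub_ne_zero.mpr (hx i hi)
  rw [Lagrange.nodal_eq_mul_nodal_erase hi]
  simp [field]

lemma eq_C_leadingCoeff_mul_nodal {ι : Type*} [Fintype ι] {P : K[X]} {v : ι → K}
    (hv : Function.Injective v) (hroot : ∀ i, P.eval (v i) = 0)
    (hdeg : P.natDegree = Fintype.card ι) :
    P = C P.leadingCoeff * Lagrange.nodal univ v := by
  refine eq_leadingCoeff_mul_of_monic_of_dvd_of_natDegree_le Lagrange.nodal_monic ?_ ?_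
  · exact Finset.prod_dvd_of_coprime
      (fun i _ k _ hik => pairwise_coprime_X_sub_C hv hik)
      fun i _ => dvd_iff_isRoot.mpr (hroot i)
  · rw [Lagrange.natDegree_nodal, hdeg, card_univ]

theorem two_mul_eval_mul_sum_one_div_sub_add_eval_eq_zero {ι : Type*} [Fintype ι] [DecidableEq ι]
    {σ τ P : K[X]} (hσ : σ.natDegree ≤ 2) (hτ : τ.natDegree ≤ 1)
    (hpearson : ∀ R : K[X], Λ (σ * R.derivative + τ * R) = 0)
    (hdef : ∀ R : K[X], R ≠ 0 → Λ (R * R) ≠ 0)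
    (horth : ∀ G : K[X], G.natDegree < P.natDegree → Λ (P * G) = 0)
    (hdeg : P.natDegree = Fintype.card ι) {v : ι → K} (hv : Function.Injective v)
    (hroot : ∀ i, P.eval (v i) = 0) (j : ι) :
    2 * σ.eval (v j) * ∑ l ∈ univ.erase j, 1 / (v j - v l) + τ.eval (v j) = 0 := by
  set Q : K[X] := Lagrange.nodal (univ.erase j) v
  have hcard : 0 < Fintype.card ι := Fintype.card_pos_iff.mpr ⟨j⟩
  have hlead : P.leadingCoeff ≠ 0 :=
    leadingCoeff_ne_zero.mpr (ne_zero_of_natDegree_gt (hdeg ▸ hcard))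
  have hPQ : P = P.leadingCoeff • ((X - C (v j)) * Q) := by
    rw [smul_eq_C_mul, ← Lagrange.nodal_eq_mul_nodal_erase (mem_univ j)]
    exact eq_C_leadingCoeff_mul_nodal hv hroot hdeg
  have hQdeg : Q.natDegree < P.natDegree := by
    rw [Lagrange.natDegree_nodal, card_erase_of_mem (mem_univ j), card_univ, hdeg]
    exact Nat.sub_lt hcard one_pos
  have hQorth : ∀ G : K[X], G.natDegree ≤ Q.natDegree → Λ ((X - C (v j)) * Q * G) = 0 := by
    intro G hG
    have h := horth G (hG.trans_lt hQdeg)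
    rw [hPQ, smul_mul_assoc, map_smul, smul_eq_mul] at h
    exact (mul_eq_zero.mp h).resolve_left hlead
  have hne : ∀ i ∈ univ.erase j, v j ≠ v i := fun i hi => hv.ne (ne_of_mem_erase hi).symm
  have hkey := two_mul_eval_mul_eval_derivative_add_eq_zero hσ hτ hpearson hQorth
    (hdef Q Lagrange.nodal_ne_zero)
  rw [eval_derivative_nodal_eq_mul_sum hne] at hkey
  refine (mul_eq_zero.mp ?_).resolve_left (Lagrange.eval_nodal_not_at_node hne)
  linear_combination hkey

end Pearson

section JacobiFunctional

open Polynomial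

variable {α β : ℝ}

lemma intervalIntegrable_one_sub_rpow_mul_one_add_rpow (hα : -1 < α) (hβ : -1 < β) :
    IntervalIntegrable (fun x : ℝ => (1 - x) ^ α * (1 + x) ^ β) volume (-1) 1 := by
  have hleft : ∀ {α β : ℝ}, -1 < β →
      IntervalIntegrable (fun x : ℝ => (1 - x) ^ α * (1 + x) ^ β) volume (-1) 0 := by
    intro α β hβ
    refine IntervalIntegrable.continuousOn_mul ?_ fun x hx => ?_
    · simpa using (intervalIntegral.intervalIntegrable_rpow' (a := 0) (b := 1) hβ).comp_add_left 1
    · rw [Set.uIcc_of_le neg_one_lt_zero.le] at hx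
      have hpos : 1 - x ≠ 0 := by linarith [hx.2]
      exact (ContinuousAt.rpow_const (by fun_prop) (.inl hpos)).continuousWithinAt
  have hright : IntervalIntegrable (fun x : ℝ => (1 - x) ^ α * (1 + x) ^ β) volume 0 1 := by
    rw [IntervalIntegrable.iff_comp_neg, neg_zero]
    simpa only [sub_neg_eq_add, ← sub_eq_add_neg, mul_comm] using (hleft (α := β) hα).symm
  exact (hleft hβ).trans hright

lemma intervalIntegrable_eval_mul_jacobi_weight (hα : -1 < α) (hβ : -1 < β) (R : ℝ[X]) :
    IntervalIntegrable (fun x : ℝ => R.eval x * ((1 - x) ^ α * (1 + x) ^ β)) volume (-1) 1 :=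
  (intervalIntegrable_one_sub_rpow_mul_one_add_rpow hα hβ).continuousOn_mul
    R.continuous.continuousOn

/-- Integration against the Jacobi weight `(1 - x) ^ α * (1 + x) ^ β` on `(-1, 1)`, as a linear
functional on polynomials. -/
noncomputable def jacobiFunctional (hα : -1 < α) (hβ : -1 < β) : ℝ[X] →ₗ[ℝ] ℝ where
  toFun R := ∫ x in (-1 : ℝ)..1, R.eval x * ((1 - x) ^ α * (1 + x) ^ β)
  map_add' R T := by
    simp only [eval_add, add_mul]
    exact intervalIntegral.integral_add (intervalIntegrable_eval_mul_jacobi_weight hα hβ R)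
      (intervalIntegrable_eval_mul_jacobi_weight hα hβ T)
  map_smul' c R := by
    simp only [eval_smul, smul_eq_mul, mul_assoc, RingHom.id_apply]
    exact intervalIntegral.integral_const_mul c _

lemma jacobiFunctional_apply (hα : -1 < α) (hβ : -1 < β) (R : ℝ[X]) :
    jacobiFunctional hα hβ R =
      ∫ x in Set.Ioo (-1 : ℝ) 1, R.eval x * ((1 - x) ^ α * (1 + x) ^ β) := by
  rw [← integral_Ioc_eq_integral_Ioo, ← intervalIntegral.integral_of_le (by norm_num)]
  rfl

lemma jacobiFunctional_mul_self_pos (hα : -1 < α) (hβ : -1 < β) {R : ℝ[X]} (hR : R ≠ 0) :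
    0 < jacobiFunctional hα hβ (R * R) := by
  have hweight : ∀ x ∈ Set.Ioo (-1 : ℝ) 1, 0 < (1 - x) ^ α * (1 + x) ^ β := fun x hx =>
    mul_pos (rpow_pos_of_pos (by linarith [hx.2]) _) (rpow_pos_of_pos (by linarith [hx.1]) _)
  have hsupport : Set.Ioo (-1 : ℝ) 1 \ (R.roots.toFinset : Set ℝ) ⊆
      (Function.support fun x => (R * R).eval x * ((1 - x) ^ α * (1 + x) ^ β)) ∩
        Set.Ioo (-1) 1 := by
    rintro x ⟨hx, hxroot⟩
    have hRx : R.eval x ≠ 0 := by simpa [hR] using hxroot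
    refine ⟨?_, hx⟩
    simpa only [Function.mem_support, eval_mul] using
      mul_ne_zero (mul_ne_zero hRx hRx) (hweight x hx).ne'
  rw [jacobiFunctional_apply, setIntegral_pos_iff_support_of_nonneg_ae]
  · refine lt_of_lt_of_le ?_ (measure_mono hsupport)
    rw [measure_sdiff_null (R.roots.toFinset.finite_toSet.measure_zero _)]
    simp
  · refine (ae_restrict_mem measurableSet_Ioo).mono fun x hx => ?_
    simp only [Pi.zero_apply, eval_mul]
    exact mul_nonneg (mul_self_nonneg _) (hweight x hx).le
  · exact (intervalIntegrable_iff_integrableOn_Ioo_of_le (by norm_num)).mp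
      (intervalIntegrable_eval_mul_jacobi_weight hα hβ (R * R))

lemma hasDerivAt_eval_mul_one_sub_rpow_mul_one_add_rpow (R : ℝ[X]) {x : ℝ}
    (hx : x ∈ Set.Ioo (-1 : ℝ) 1) :
    HasDerivAt (fun x => R.eval x * ((1 - x) ^ (α + 1) * (1 + x) ^ (β + 1)))
      (((1 - X ^ 2) * R.derivative + (C (β + 1) * (1 - X) - C (α + 1) * (1 + X)) * R).eval x *
        ((1 - x) ^ α * (1 + x) ^ β)) x := by
  have hsub : 0 < 1 - x := by linarith [hx.2]
  have hadd : 0 < 1 + x := by linarith [hx.1]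
  have hleft := ((hasDerivAt_id x).const_sub 1).rpow_const (p := α + 1) (.inl hsub.ne')
  have hright := ((hasDerivAt_id x).const_add 1).rpow_const (p := β + 1) (.inl hadd.ne')
  refine ((R.hasDerivAt x).mul (hleft.mul hright)).congr_deriv ?_
  simp only [Pi.mul_apply, id_eq, add_sub_cancel_right, rpow_add_one hsub.ne',
    rpow_add_one hadd.ne', eval_add, eval_sub, eval_mul, eval_pow, eval_one, eval_X, eval_C]
  ring

lemma jacobiFunctional_pearson (hα : -1 < α) (hβ : -1 < β) (R : ℝ[X]) :
    jacobiFunctional hα hβ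
      ((1 - X ^ 2) * R.derivative + (C (β + 1) * (1 - X) - C (α + 1) * (1 + X)) * R) = 0 := by
  have hcont : Continuous fun x : ℝ => R.eval x * ((1 - x) ^ (α + 1) * (1 + x) ^ (β + 1)) :=
    R.continuous.mul <|
      (Continuous.rpow_const (by fun_prop) fun _ => .inr (by linarith)).mul
        (Continuous.rpow_const (by fun_prop) fun _ => .inr (by linarith))
  refine (intervalIntegral.integral_eq_sub_of_hasDerivAt_of_le (by norm_num) hcont.continuousOn
    (fun x hx => hasDerivAt_eval_mul_one_sub_rpow_mul_one_add_rpow R hx)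
    (intervalIntegrable_eval_mul_jacobi_weight hα hβ _)).trans ?_
  simp [zero_rpow (by linarith : α + 1 ≠ 0), zero_rpow (by linarith : β + 1 ≠ 0)]

theorem sum_one_div_sub_eq_of_jacobi_orthogonal (hα : -1 < α) (hβ : -1 < β) {ι : Type*}
    [Fintype ι] [DecidableEq ι] {P : ℝ[X]} (hdeg : P.natDegree = Fintype.card ι)
    (horth : ∀ G : ℝ[X], G.natDegree < Fintype.card ι →
      ∫ x in Set.Ioo (-1 : ℝ) 1, P.eval x * G.eval x * (1 - x) ^ α * (1 + x) ^ β = 0)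
    {z : ι → ℝ} (hz : Function.Injective z) (hroot : ∀ i, P.eval (z i) = 0)
    (hmem : ∀ i, z i ∈ Set.Ioo (-1 : ℝ) 1) (j : ι) :
    ∑ l ∈ univ.erase j, 1 / (z j - z l) =
      (α + 1) / 2 * (1 / (1 - z j)) - (β + 1) / 2 * (1 / (1 + z j)) := by
  have hstieltjes := two_mul_eval_mul_sum_one_div_sub_add_eval_eq_zero
    (σ := 1 - X ^ 2) (τ := C (β + 1) * (1 - X) - C (α + 1) * (1 + X))
    (by compute_degree) (by compute_degree) (jacobiFunctional_pearson hα hβ)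
    (fun R hR => (jacobiFunctional_mul_self_pos hα hβ hR).ne')
    (fun G hG => by
      rw [jacobiFunctional_apply, ← horth G (hdeg ▸ hG)]
      simp only [eval_mul, mul_assoc])
    hdeg hz hroot j
  have hsub : 1 - z j ≠ 0 := by linarith [(hmem j).2]
  have hadd : 1 + z j ≠ 0 := by linarith [(hmem j).1]
  simp only [eval_sub, eval_mul, eval_add, eval_pow, eval_one, eval_X, eval_C] at hstieltjes
  field_simp
  linear_combination hstieltjes

end JacobiFunctional

section PairSums

variable {n M : Type*} [Fintype n] [LinearOrder n] [AddCommMonoid M]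

lemma sum_lt_add_swap_eq_sum_erase (g : n → n → M) :
    ∑ p : {p : n × n // p.1 < p.2}, (g p.1.1 p.1.2 + g p.1.2 p.1.1) =
      ∑ i, ∑ j ∈ univ.erase i, g i j := by
  have hswap : ∑ p : n × n with p.1 < p.2, g p.2 p.1 = ∑ p : n × n with p.2 < p.1, g p.1 p.2 :=
    sum_equiv (Equiv.prodComm n n) (by simp) (by simp)
  have hdisj : Disjoint (univ.filter fun p : n × n => p.1 < p.2)
      (univ.filter fun p : n × n => p.2 < p.1) :=
    disjoint_filter.mpr fun p _ h => h.not_gt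
  calc ∑ p : {p : n × n // p.1 < p.2}, (g p.1.1 p.1.2 + g p.1.2 p.1.1)
      = ∑ p : n × n with p.1 < p.2, (g p.1 p.2 + g p.2 p.1) :=
        (sum_subtype _ (by simp) fun p : n × n => g p.1 p.2 + g p.2 p.1).symm
    _ = ∑ p : n × n with p.1 ≠ p.2, g p.1 p.2 := by
        rw [sum_add_distrib, hswap, ← sum_union hdisj, ← filter_or]
        simp only [← ne_iff_lt_or_gt]
    _ = ∑ i, ∑ j ∈ univ.erase i, g i j := by
        simp only [sum_filter, Fintype.sum_prod_type, ← filter_ne]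

end PairSums

section JacobiEnsemble

variable {n : Type*} [LinearOrder n]

/-- The index set of the factors of the Jacobi density: one factor for each pair `i < j`, and one
for each point and each of the walls `1` and `-1`. -/
abbrev JacobiIndex (n : Type*) [LinearOrder n] : Type _ :=
  {p : n × n // p.1 < p.2} ⊕ n ⊕ n

/-- The affine factors of the Jacobi density: the distances between the points `x i` and from these
points to the walls `1` and `-1`. -/
def jacobiFactor (x : n → ℝ) : JacobiIndex n → ℝ :=
  Sum.elim (fun p => x p.1.2 - x p.1.1) (Sum.elim (fun i => 1 - x i) fun i => 1 + x i)

/-- The exponents of the Jacobi density: `u` for pairs, `v` for the wall `1`, `w` for the wall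
`-1`. -/
def jacobiExponent (u v w : ℝ) : JacobiIndex n → ℝ :=
  Sum.elim (fun _ => u) (Sum.elim (fun _ => v) fun _ => w)

/-- The linear parts of the factors of the Jacobi density, divided by the values of the factors
at `z`. -/
noncomputable def jacobiForm (z : n → ℝ) (k : JacobiIndex n) : (n → ℝ) →L[ℝ] ℝ :=
  (jacobiFactor z k)⁻¹ •
    Sum.elim
      (fun p : {p : n × n // p.1 < p.2} =>
        ContinuousLinearMap.proj (R := ℝ) (φ := fun _ : n => ℝ) p.1.2 -
          ContinuousLinearMap.proj p.1.1)
      (Sum.elim (fun i => -ContinuousLinearMap.proj i) ContinuousLinearMap.proj) k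

/-- The closed alcove of ordered configurations in `[-1, 1]`. -/
def jacobiAlcove (n : Type*) [Preorder n] : Set (n → ℝ) :=
  {x | Monotone x ∧ ∀ i, x i ∈ Set.Icc (-1 : ℝ) 1}

variable {z : n → ℝ}

lemma jacobiExponent_pos {u v w : ℝ} (hu : 0 < u) (hv : 0 < v) (hw : 0 < w) (k : JacobiIndex n) :
    0 < jacobiExponent u v w k := by
  rcases k with _ | _ | _ <;> assumption

lemma smul_jacobiExponent_add (κ p q r s : ℝ) :
    κ • jacobiExponent 1 (p / 2) (q / 2) + jacobiExponent (n := n) 0 (-r) (-s) =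
      jacobiExponent κ (κ * p / 2 - r) (κ * q / 2 - s) := by
  ext (_ | _ | _) <;> simp [jacobiExponent] <;> ring

lemma jacobiFactor_pos (hmono : StrictMono z) (hmem : ∀ i, z i ∈ Set.Ioo (-1 : ℝ) 1)
    (k : JacobiIndex n) : 0 < jacobiFactor z k := by
  rcases k with p | i | i
  · exact sub_pos.mpr (hmono p.2)
  · exact sub_pos.mpr (hmem i).2
  · exact neg_lt_iff_pos_add'.mp (hmem i).1

lemma mem_jacobiAlcove_iff_jacobiFactor_nonneg {x : n → ℝ} :
    x ∈ jacobiAlcove n ↔ ∀ k, 0 ≤ jacobiFactor x k := by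
  simp only [jacobiAlcove, Set.mem_ofPred_eq, monotone_iff_forall_lt, Set.mem_Icc, jacobiFactor,
    Sum.forall, Sum.elim_inl, Sum.elim_inr, Subtype.forall, Prod.forall, sub_nonneg,
    ← neg_le_iff_add_nonneg', forall_and]
  tauto

lemma jacobiForm_inl (k : {p : n × n // p.1 < p.2}) (y : n → ℝ) :
    jacobiForm z (.inl k) y = (y k.1.2 - y k.1.1) / (z k.1.2 - z k.1.1) :=
  inv_mul_eq_div _ _

lemma jacobiForm_inr_inl (i : n) (y : n → ℝ) :
    jacobiForm z (.inr (.inl i)) y = -y i / (1 - z i) :=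
  inv_mul_eq_div _ _

lemma jacobiForm_inr_inr (i : n) (y : n → ℝ) :
    jacobiForm z (.inr (.inr i)) y = y i / (1 + z i) :=
  inv_mul_eq_div _ _

lemma sum_jacobiExponent_mul [Fintype n] (u v w : ℝ) (f : JacobiIndex n → ℝ) :
    ∑ k, jacobiExponent u v w k * f k =
      u * ∑ k, f (.inl k) + ∑ i, (v * f (.inr (.inl i)) + w * f (.inr (.inr i))) := by
  simp only [Fintype.sum_sum_type, jacobiExponent, Sum.elim_inl, Sum.elim_inr, mul_sum,
    sum_add_distrib]

lemma one_add_jacobiForm_sub {k : JacobiIndex n} (hk : jacobiFactor z k ≠ 0) (x : n → ℝ) :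
    1 + jacobiForm z k (x - z) = jacobiFactor x k / jacobiFactor z k := by
  have hcancel : jacobiFactor z k * jacobiForm z k (x - z) =
      jacobiFactor x k - jacobiFactor z k := by
    rw [jacobiForm, smul_apply, smul_eq_mul, mul_inv_cancel_left₀ hk]
    rcases k with p | i | i
    · exact sub_sub_sub_comm _ _ _ _
    · exact (neg_sub _ _).trans (sub_sub_sub_cancel_left _ _ _).symm
    · exact (add_sub_add_left_eq_sub _ _ _).symm
  rw [eq_div_iff hk, add_mul, one_mul, mul_comm, hcancel, add_sub_cancel]

lemma eq_zero_of_jacobiForm_eq_zero (hz : ∀ k, jacobiFactor z k ≠ 0) {y : n → ℝ}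
    (hy : ∀ k, jacobiForm z k y = 0) : y = 0 := by
  ext i
  simpa [jacobiForm, hz] using hy (.inr (.inr i))

variable [Fintype n]

lemma preimage_sub_affinePolytope_jacobiForm (hz : ∀ k, 0 < jacobiFactor z k) :
    (· - z) ⁻¹' affinePolytope (jacobiForm z) = jacobiAlcove n := by
  ext x
  simp only [Set.mem_preimage, affinePolytope, Set.mem_ofPred_eq,
    mem_jacobiAlcove_iff_jacobiFactor_nonneg, one_add_jacobiForm_sub (hz _).ne']
  exact forall_congr' fun k => by rw [le_div_iff₀ (hz k), zero_mul]

lemma prod_jacobiFactor_rpow (u v w : ℝ) (x : n → ℝ) :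
    ∏ k, jacobiFactor x k ^ jacobiExponent u v w k =
      (∏ p ∈ univ.filter (fun p : n × n => p.1 < p.2), (x p.2 - x p.1) ^ u) *
        ∏ i, ((1 - x i) ^ v * (1 + x i) ^ w) := by
  rw [Fintype.prod_sum_type, Fintype.prod_sum_type, prod_mul_distrib]
  congr 1
  exact (prod_subtype _ (by simp) fun p : n × n => (x p.2 - x p.1) ^ u).symm

lemma prod_jacobiFactor_rpow_eq_mul_affinePowerProd (hz : ∀ k, 0 < jacobiFactor z k)
    (e : JacobiIndex n → ℝ) {x : n → ℝ} (hx : x ∈ jacobiAlcove n) :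
    ∏ k, jacobiFactor x k ^ e k =
      (∏ k, jacobiFactor z k ^ e k) * affinePowerProd (jacobiForm z) e (x - z) := by
  rw [affinePowerProd, ← prod_mul_distrib]
  refine prod_congr rfl fun k _ => ?_
  rw [one_add_jacobiForm_sub (hz k).ne',
    div_rpow (mem_jacobiAlcove_iff_jacobiFactor_nonneg.mp hx k) (hz k).le,
    mul_div_cancel₀ _ (rpow_pos_of_pos (hz k) _).ne']

lemma setIntegral_jacobiAlcove (hz : ∀ k, 0 < jacobiFactor z k) (e : JacobiIndex n → ℝ)
    (h : (n → ℝ) → ℝ) :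
    ∫ x in jacobiAlcove n, h (x - z) * ∏ k, jacobiFactor x k ^ e k =
      (∏ k, jacobiFactor z k ^ e k) *
        ∫ y in affinePolytope (jacobiForm z), h y * affinePowerProd (jacobiForm z) e y := by
  have hpre := preimage_sub_affinePolytope_jacobiForm hz
  have hmeas : MeasurableSet (jacobiAlcove n) :=
    hpre ▸ (isClosed_affinePolytope.preimage (continuous_sub_right z)).measurableSet
  have htranslate := (measurePreserving_sub_right volume z).setIntegral_preimage_emb
    (measurableEmbedding_subRight z)
    (fun y => h y * affinePowerProd (jacobiForm z) e y) (affinePolytope (jacobiForm z))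
  rw [← htranslate, hpre, ← integral_const_mul]
  refine setIntegral_congr_fun hmeas fun x hx => ?_
  rw [prod_jacobiFactor_rpow_eq_mul_affinePowerProd hz e hx]
  ring

lemma sum_jacobiExponent_smul_jacobiForm_eq_zero {p q : ℝ}
    (hcrit : ∀ j, ∑ l ∈ univ.erase j, 1 / (z j - z l) =
      p * (1 / (1 - z j)) - q * (1 / (1 + z j))) :
    ∑ k, jacobiExponent 1 p q k • jacobiForm z k = 0 := by
  ext y
  have hpairs : ∑ k, jacobiForm z (.inl k) y = ∑ j, y j * ∑ l ∈ univ.erase j, 1 / (z j - z l) := by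
    simp only [mul_sum, ← sum_lt_add_swap_eq_sum_erase fun i j => y i * (1 / (z i - z j))]
    refine sum_congr rfl fun k _ => ?_
    rw [jacobiForm_inl, ← neg_sub (z k.1.2) (z k.1.1), one_div_neg_eq_neg_one_div]
    ring
  have hwalls : ∑ i, (p * jacobiForm z (.inr (.inl i)) y + q * jacobiForm z (.inr (.inr i)) y) =
      -∑ j, y j * ∑ l ∈ univ.erase j, 1 / (z j - z l) := by
    rw [← sum_neg_distrib]
    refine sum_congr rfl fun i _ => ?_
    rw [hcrit, jacobiForm_inr_inl, jacobiForm_inr_inr]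
    ring
  simp only [_root_.sum_apply, smul_apply, smul_eq_mul, zero_apply, sum_jacobiExponent_mul]
  rw [hpairs, hwalls, one_mul, add_neg_cancel]

/-- The matrix `S` of the limit theorem, with `p`, `q` in place of `a + b`, `b`: the Hessian at `z`
of the negative logarithm of `∏ (x j - x i) * ∏ (1 - x i) ^ (p / 2) * (1 + x i) ^ (q / 2)`. -/
noncomputable def jacobiHessian (p q : ℝ) (z : n → ℝ) : Matrix n n ℝ :=
  Matrix.of fun i j =>
    if i = j then
      (∑ l ∈ univ.erase j, 1 / (z j - z l) ^ 2) + p / 2 * (1 / (1 - z j) ^ 2) +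
        q / 2 * (1 / (1 + z j) ^ 2)
    else -1 / (z i - z j) ^ 2

lemma sum_jacobiHessian_mul (p q : ℝ) (y : n → ℝ) (i : n) :
    ∑ j, y i * jacobiHessian p q z i j * y j =
      (∑ j ∈ univ.erase i, y i * (y i - y j) / (z i - z j) ^ 2) +
        (p / 2 * (y i / (1 - z i)) ^ 2 + q / 2 * (y i / (1 + z i)) ^ 2) := by
  have hoff : ∑ j ∈ univ.erase i, y i * jacobiHessian p q z i j * y j =
      ∑ j ∈ univ.erase i, -(y i * y j / (z i - z j) ^ 2) := sum_congr rfl fun j hj => by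
    rw [jacobiHessian, Matrix.of_apply, if_neg (ne_of_mem_erase hj).symm]
    ring
  have hsplit : ∑ j ∈ univ.erase i, y i * (y i - y j) / (z i - z j) ^ 2 =
      y i ^ 2 * ∑ j ∈ univ.erase i, 1 / (z i - z j) ^ 2 +
        ∑ j ∈ univ.erase i, -(y i * y j / (z i - z j) ^ 2) := by
    rw [mul_sum, ← sum_add_distrib]
    exact sum_congr rfl fun j _ => by ring
  rw [← add_sum_erase _ _ (mem_univ i), hoff, hsplit, jacobiHessian, Matrix.of_apply, if_pos rfl,
    div_pow, div_pow]
  ring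

lemma logBarrierHessian_jacobiForm (p q : ℝ) (y : n → ℝ) :
    logBarrierHessian (jacobiExponent 1 (p / 2) (q / 2)) (jacobiForm z) y =
      ∑ i, ∑ j, y i * jacobiHessian p q z i j * y j := by
  have hpairs : ∑ k, jacobiForm z (.inl k) y ^ 2 =
      ∑ i, ∑ j ∈ univ.erase i, y i * (y i - y j) / (z i - z j) ^ 2 := by
    rw [← sum_lt_add_swap_eq_sum_erase fun i j => y i * (y i - y j) / (z i - z j) ^ 2]
    refine sum_congr rfl fun k _ => ?_
    rw [jacobiForm_inl, div_pow, sub_sq_comm (z k.1.2)]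
    ring
  rw [logBarrierHessian, sum_jacobiExponent_mul, hpairs, one_mul, ← sum_add_distrib]
  simp only [sum_jacobiHessian_mul, jacobiForm_inr_inl, jacobiForm_inr_inr, neg_div, neg_sq]

lemma isSymm_jacobiHessian (p q : ℝ) : (jacobiHessian p q z).IsSymm := by
  refine Matrix.IsSymm.ext fun i j => ?_
  rcases eq_or_ne i j with rfl | hij
  · rfl
  · simp only [jacobiHessian, Matrix.of_apply, if_neg hij, if_neg hij.symm, sub_sq_comm]

lemma posDef_jacobiHessian {p q : ℝ} (hp : 0 < p) (hq : 0 < q)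
    (hz : ∀ k, jacobiFactor z k ≠ 0) : (jacobiHessian p q z).PosDef := by
  obtain ⟨m, hm, hle⟩ := exists_mul_sq_norm_le_logBarrierHessian
    (jacobiExponent_pos one_pos (half_pos hp) (half_pos hq))
    (fun _ => eq_zero_of_jacobiForm_eq_zero hz)
  refine .of_dotProduct_mulVec_pos (isSymm_jacobiHessian p q) fun y hy => ?_
  calc 0 < m * ‖y‖ ^ 2 := by positivity
    _ ≤ ∑ i, ∑ j, y i * jacobiHessian p q z i j * y j :=
        (hle y).trans_eq (logBarrierHessian_jacobiForm p q y)
    _ = star y ⬝ᵥ (jacobiHessian p q z).mulVec y := by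
        simp only [dotProduct, Matrix.mulVec, mul_sum, mul_assoc, star_trivial]

lemma tendsto_jacobi_clt_of_critical {p q : ℝ} (hp : 0 < p) (hq : 0 < q)
    (hz : ∀ k, 0 < jacobiFactor z k)
    (hcrit : ∀ j, ∑ l ∈ univ.erase j, 1 / (z j - z l) =
      p / 2 * (1 / (1 - z j)) - q / 2 * (1 / (1 + z j)))
    (r s : ℝ) (f : BoundedContinuousFunction (n → ℝ) ℝ) :
    Tendsto (fun κ : ℝ =>
        (∫ x in jacobiAlcove n, f (√κ • (x - z)) *
          ∏ k, jacobiFactor x k ^ jacobiExponent κ (κ * p / 2 - r) (κ * q / 2 - s) k) /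
        ∫ x in jacobiAlcove n,
          ∏ k, jacobiFactor x k ^ jacobiExponent κ (κ * p / 2 - r) (κ * q / 2 - s) k)
      atTop
      (𝓝 ((∫ y : n → ℝ, f y * exp (-(∑ i, ∑ j, y i * jacobiHessian p q z i j * y j) / 2)) /
        ∫ y : n → ℝ, exp (-(∑ i, ∑ j, y i * jacobiHessian p q z i j * y j) / 2))) := by
  have hclt := tendsto_affinePowerProd_clt volume
    (jacobiExponent_pos one_pos (half_pos hp) (half_pos hq))
    (sum_jacobiExponent_smul_jacobiForm_eq_zero hcrit)
    (fun _ => eq_zero_of_jacobiForm_eq_zero fun k => (hz k).ne') (jacobiExponent 0 (-r) (-s)) f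
  simp only [logBarrierHessian_jacobiForm, smul_jacobiExponent_add, ← neg_div] at hclt
  refine hclt.congr fun κ => ?_
  have hnum := setIntegral_jacobiAlcove hz
    (jacobiExponent κ (κ * p / 2 - r) (κ * q / 2 - s)) fun y => f (√κ • y)
  have hden := setIntegral_jacobiAlcove hz
    (jacobiExponent κ (κ * p / 2 - r) (κ * q / 2 - s)) fun _ => 1
  simp only [one_mul] at hden
  rw [hnum, hden, mul_div_mul_left _ _ (prod_pos fun k _ => rpow_pos_of_pos (hz k) _).ne']

end JacobiEnsemble

theorem jacobi_ensemble_clt_general {n : Type*} [Fintype n] [LinearOrder n] {p q : ℝ}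
    (hp : 0 < p) (hq : 0 < q) (r s : ℝ) {P : Polynomial ℝ} (hdeg : P.natDegree = Fintype.card n)
    (horth : ∀ Q : Polynomial ℝ, Q.natDegree < Fintype.card n →
      ∫ x in Set.Ioo (-1 : ℝ) 1, P.eval x * Q.eval x * (1 - x) ^ (p - 1) * (1 + x) ^ (q - 1) = 0)
    {z : n → ℝ} (hmono : StrictMono z) (hroot : ∀ i, P.eval (z i) = 0)
    (hmem : ∀ i, z i ∈ Set.Ioo (-1 : ℝ) 1) {w : ℝ → (n → ℝ) → ℝ}
    (hw : ∀ κ x, w κ x = (∏ k ∈ univ.filter (fun k : n × n => k.1 < k.2), (x k.2 - x k.1) ^ κ) *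
      ∏ i, ((1 - x i) ^ (κ * p / 2 - r) * (1 + x i) ^ (κ * q / 2 - s))) :
    (jacobiHessian p q z).PosDef ∧
      ∀ f : BoundedContinuousFunction (n → ℝ) ℝ,
        Tendsto (fun κ : ℝ =>
            (∫ x in jacobiAlcove n, f (√κ • (x - z)) * w κ x) / ∫ x in jacobiAlcove n, w κ x)
          atTop
          (𝓝 (∫ x, f x * ((2 * π) ^ (-(Fintype.card n : ℝ) / 2) * √(jacobiHessian p q z).det *
            exp (-(∑ i, ∑ j, x i * jacobiHessian p q z i j * x j) / 2)))) := by
  have hz := jacobiFactor_pos hmono hmem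
  have hposDef := posDef_jacobiHessian hp hq fun k => (hz k).ne'
  have hcrit := sum_one_div_sub_eq_of_jacobi_orthogonal (α := p - 1) (β := q - 1)
    (by linarith) (by linarith) hdeg horth hmono.injective hroot hmem
  simp only [sub_add_cancel] at hcrit
  refine ⟨hposDef, fun f => ?_⟩
  simp only [← integral_mul_exp_neg_quadratic_div hposDef, hw, ← prod_jacobiFactor_rpow]
  exact tendsto_jacobi_clt_of_critical hp hq hz hcrit r s f

theorem jacobi_ensemble_clt
    (N : ℕ) (hN : 1 ≤ N) (a b : ℝ) (ha : 0 ≤ a) (hb : 0 < b)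
    (α β : ℝ) (hα : α = a + b - 1) (hβ : β = b - 1)
    (P : Polynomial ℝ) (hPdeg : P.natDegree = N)
    (hPorth : ∀ Q : Polynomial ℝ, Q.natDegree < N →
      ∫ x in Set.Ioo (-1 : ℝ) 1,
        P.eval x * Q.eval x * (1 - x) ^ α * (1 + x) ^ β = 0)
    (hPone : P.eval 1 = (∏ j ∈ Finset.range N, (α + 1 + j)) / (N.factorial : ℝ))
    (z : Fin N → ℝ) (hzmono : StrictMono z)
    (hzroot : ∀ i, P.eval (z i) = 0)
    (hzmem : ∀ i, z i ∈ Set.Ioo (-1 : ℝ) 1)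
    (A : Set (Fin N → ℝ))
    (hA : A = {x | Monotone x ∧ ∀ i, x i ∈ Set.Icc (-1 : ℝ) 1})
    (w : ℝ → (Fin N → ℝ) → ℝ)
    (hw : w = fun κ x =>
      (∏ p ∈ Finset.univ.filter (fun p : Fin N × Fin N => p.1 < p.2), (x p.2 - x p.1) ^ κ) *
      ∏ i, ((1 - x i) ^ (κ * (a + b) / 2 - 1 / 2) * (1 + x i) ^ (κ * b / 2 - 1 / 2)))
    (S : Matrix (Fin N) (Fin N) ℝ)
    (hS : S = Matrix.of fun i j =>
      if i = j then
        (∑ l ∈ Finset.univ.erase j, 1 / (z j - z l) ^ 2) +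
          (a + b) / 2 * (1 / (1 - z j) ^ 2) + b / 2 * (1 / (1 + z j) ^ 2)
      else -1 / (z i - z j) ^ 2)
    : S.PosDef ∧
      ∀ f : BoundedContinuousFunction (Fin N → ℝ) ℝ,
        Tendsto (fun κ : ℝ =>
            (∫ x in A, f (Real.sqrt κ • (x - z)) * w κ x) / (∫ x in A, w κ x))
          atTop
          (𝓝 (∫ x : Fin N → ℝ, f x *
            ((2 * π) ^ (-(N : ℝ) / 2) * Real.sqrt S.det *
              Real.exp (-(∑ i, ∑ j, x i * S i j * x j) / 2)))) := by
  subst hα hβ hA hw hS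
  simpa only [Fintype.card_fin] using!
    jacobi_ensemble_clt_general (add_pos_of_nonneg_of_pos ha hb) hb (1 / 2) (1 / 2)
      (hPdeg.trans (Fintype.card_fin N).symm) (by rwa [Fintype.card_fin]) hzmono hzroot hzmem
      fun _ _ => rfl
end
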